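/- arXiv:1907.03662 — 5 statements merged into one kernel-verified Lean document; each statement's English description precedes it below -/
import Mathlib

section
/- Let G be a connected simple graph on the vertex set {1,…,n} (n ≥ 2) with non-empty edge set E, and let (𝔫_G, ⟨·,·⟩) be the associated real metric Lie algebra with orthonormal basis {e_i, f_i : 1 ≤ i ≤ n} ∪ {z_s, w_s : s ∈ E}. Then the space of Killing–Yano tensors on (𝔫_G, ⟨·,·⟩) is a one-dimensional real vector space; explicitly, every Killing–Yano tensor T equals a·T₀ for a unique a ∈ ℝ, where T₀ is the endomorphism determined by T₀e_i = f_i, T₀f_i = −e_i, T₀z_s = 3w_s, T₀w_s = −3z_s. -/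
/-- `x` belongs to the center of the Lie algebra `V`. -/
def IsCentral {V : Type*} [LieRing V] (x : V) : Prop := ∀ y : V, ⁅x, y⁆ = 0

/-- Membership in `𝔳 = 𝔷^⊥`, the orthogonal complement of the center with respect to the
inner product `B`. -/
def InVperp {V : Type*} [LieRing V] [LieAlgebra ℝ V]
    (B : V →ₗ[ℝ] V →ₗ[ℝ] ℝ) (x : V) : Prop :=
  ∀ z : V, IsCentral z → B x z = 0

/-- The Lie algebra `V` is 2-step nilpotent: non-abelian and `⁅⁅V,V⁆,V⁆ = 0`. -/
def TwoStepNilpotent (V : Type*) [LieRing V] : Prop :=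
  (∃ x y : V, ⁅x, y⁆ ≠ 0) ∧ ∀ x y z : V, ⁅⁅x, y⁆, z⁆ = 0

/-- A Killing–Yano tensor on `(V, B)`: a skew-symmetric endomorphism preserving the center
and satisfying `T⁅x,y⁆ = 3⁅Tx,y⁆` for `x, y ∈ 𝔳 = 𝔷^⊥`. -/
def IsKY {V : Type*} [LieRing V] [LieAlgebra ℝ V]
    (B : V →ₗ[ℝ] V →ₗ[ℝ] ℝ) (T : V →ₗ[ℝ] V) : Prop :=
  (∀ x y : V, B (T x) y = - B x (T y)) ∧
  (∀ z : V, IsCentral z → IsCentral (T z)) ∧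
  (∀ x y : V, InVperp B x → InVperp B y → T ⁅x, y⁆ = (3 : ℝ) • ⁅T x, y⁆)

/-- The Koszul formula characterizing the Levi-Civita product of `(V, B)`. -/
def IsLeviCivita {V : Type*} [LieRing V] [LieAlgebra ℝ V]
    (B : V →ₗ[ℝ] V →ₗ[ℝ] ℝ) (nab : V → V → V) : Prop :=
  ∀ x y z : V, 2 * B (nab x y) z = B ⁅x, y⁆ z - B ⁅y, z⁆ x + B ⁅z, x⁆ y

/-!
The bracket of `𝔫_G` is complex bilinear for the complex structure `J` with `J e_i = f_i` and
`J z_s = w_s`, so the map equal to `J` on `𝔳` and to `3J` on `𝔷` is a Killing–Yano tensor.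

Conversely, a Killing–Yano tensor `T` satisfies `⁅Tx, y⁆ = ⁅x, Ty⁆` on `𝔳`. For an edge `{j, k}`,
the components of `x` along `e_k` and `f_k` can be read off from `⁅e_j, x⁆`. For `k ≠ i` and a
neighbour `j` of `k`, the bracket `⁅e_j, T e_i⁆` vanishes if `j = i`; if `j ≠ i` it equals
`⁅T e_j, e_i⁆`, which only involves edges at `i` and so not `{j, k}`. Thus `T e_i` lies in the span
of `e_i` and `f_i`, and skew-symmetry gives `T e_i = a_i f_i`. Applying `⁅Tx, y⁆ = ⁅x, Ty⁆` to the
ends of an edge yields `a_i = a_j`, so `a` is constant on the connected graph `G`. Finally, the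
values on the `e_i` determine `T`.
-/

theorem IsCentral.lie_right {V : Type*} [LieRing V] {x : V} (hx : IsCentral x) (y : V) :
    ⁅y, x⁆ = 0 := by
  rw [← lie_skew, hx, neg_zero]

section KillingYano

variable {V : Type*} [LieRing V] [LieAlgebra ℝ V] {B : V →ₗ[ℝ] V →ₗ[ℝ] ℝ} {T : V →ₗ[ℝ] V} {x y : V}

/-- The real vector space of Killing–Yano tensors on `(V, B)`. -/
def killingYano (B : V →ₗ[ℝ] V →ₗ[ℝ] ℝ) : Submodule ℝ (Module.End ℝ V) where
  carrier := {T | IsKY B T}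
  zero_mem' := ⟨by simp, by simp [IsCentral], by simp⟩
  add_mem' := by
    rintro S T ⟨hS, hSc, hSl⟩ ⟨hT, hTc, hTl⟩
    refine ⟨fun x y ↦ ?_, fun x hx y ↦ ?_, fun x y hx hy ↦ ?_⟩
    · simp only [LinearMap.add_apply, map_add, hS x y, hT x y, neg_add]
    · rw [LinearMap.add_apply, add_lie, hSc x hx, hTc x hx, add_zero]
    · simp only [LinearMap.add_apply, add_lie, smul_add, hSl x y hx hy, hTl x y hx hy]
  smul_mem' := by
    rintro a T ⟨hT, hTc, hTl⟩
    refine ⟨fun x y ↦ ?_, fun x hx y ↦ ?_, fun x y hx hy ↦ ?_⟩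
    · simp only [LinearMap.smul_apply, map_smul, hT x y, smul_neg]
    · rw [LinearMap.smul_apply, smul_lie, hTc x hx, smul_zero]
    · rw [LinearMap.smul_apply, LinearMap.smul_apply, smul_lie, hTl x y hx hy, smul_comm]

theorem mem_killingYano : T ∈ killingYano B ↔ IsKY B T := Iff.rfl

namespace IsKY

theorem form_apply_self (hT : IsKY B T) (hB : ∀ x y, B x y = B y x) (x : V) : B (T x) x = 0 := by
  have hxx : B (T x) x = -B (T x) x := (hT.1 x x).trans (by rw [hB])
  linarith

theorem inVperp_apply (hT : IsKY B T) (hx : InVperp B x) : InVperp B (T x) := fun c hc ↦ by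
  rw [hT.1, hx _ (hT.2.1 c hc), neg_zero]

theorem apply_lie (hT : IsKY B T) (hx : InVperp B x) (hy : InVperp B y) :
    T ⁅x, y⁆ = (3 : ℝ) • ⁅T x, y⁆ :=
  hT.2.2 x y hx hy

theorem apply_lie' (hT : IsKY B T) (hx : InVperp B x) (hy : InVperp B y) :
    T ⁅x, y⁆ = (3 : ℝ) • ⁅x, T y⁆ := by
  rw [← lie_skew, map_neg, hT.apply_lie hy hx, ← smul_neg, lie_skew]

theorem lie_apply_left_eq (hT : IsKY B T) (hx : InVperp B x) (hy : InVperp B y) :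
    ⁅T x, y⁆ = ⁅x, T y⁆ :=
  smul_right_injective V (three_ne_zero (α := ℝ))
    ((hT.apply_lie hx hy).symm.trans (hT.apply_lie' hx hy))

theorem lie_apply_self (hT : IsKY B T) (hx : InVperp B x) : ⁅x, T x⁆ = 0 := by
  simpa using (hT.apply_lie' hx hx).symm

end IsKY

end KillingYano

theorem eq_of_preconnected_of_forall_adj_eq {ι α : Type*} {G : SimpleGraph ι} (hG : G.Preconnected)
    {φ : ι → α} (hφ : ∀ i j, G.Adj i j → φ i = φ j) (i j : ι) : φ i = φ j := by
  obtain ⟨p⟩ := hG i j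
  induction p with
  | nil => rfl
  | cons hadj _ ih => exact (hφ _ _ hadj).trans ih

theorem exists_adj_lt_and_edge_eq {ι : Type*} [LinearOrder ι] {G : SimpleGraph ι} (s : G.edgeSet) :
    ∃ i j, ∃ hij : G.Adj i j, i < j ∧ s = ⟨s(i, j), G.mem_edgeSet.mpr hij⟩ := by
  obtain ⟨⟨i, j⟩, hij : G.Adj i j⟩ := s
  rcases hij.ne.lt_or_gt with hlt | hgt
  · exact ⟨i, j, hij, hlt, rfl⟩
  · exact ⟨j, i, hij.symm, hgt, Subtype.ext Sym2.eq_swap⟩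

/-- The vectors `e i`, `f i`, `z s`, `w s` span `V`, are orthonormal for the symmetric form `B`, and
satisfy the bracket relations of the real Lie algebra underlying the complex 2-step nilpotent Lie
algebra of the graph `G`. Edges are oriented by the order on the vertices. -/
structure IsGraphLieBasis {ι V : Type*} [LinearOrder ι] [LieRing V] [LieAlgebra ℝ V]
    (G : SimpleGraph ι) (B : V →ₗ[ℝ] V →ₗ[ℝ] ℝ) (e f : ι → V) (z w : G.edgeSet → V) : Prop where
  symm : ∀ x y, B x y = B y x
  form_e_e : ∀ i j, B (e i) (e j) = if i = j then 1 else 0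
  form_f_f : ∀ i j, B (f i) (f j) = if i = j then 1 else 0
  form_z_z : ∀ s t, B (z s) (z t) = if s = t then 1 else 0
  form_w_w : ∀ s t, B (w s) (w t) = if s = t then 1 else 0
  form_e_f : ∀ i j, B (e i) (f j) = 0
  form_e_z : ∀ i s, B (e i) (z s) = 0
  form_e_w : ∀ i s, B (e i) (w s) = 0
  form_f_z : ∀ i s, B (f i) (z s) = 0
  form_f_w : ∀ i s, B (f i) (w s) = 0
  form_z_w : ∀ s t, B (z s) (w t) = 0
  span_eq_top : Submodule.span ℝ (Set.range e ∪ Set.range f ∪ Set.range z ∪ Set.range w) = ⊤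
  lie_e_e_of_lt : ∀ i j, ∀ hij : G.Adj i j, i < j →
    ⁅e i, e j⁆ = z ⟨s(i, j), G.mem_edgeSet.mpr hij⟩
  lie_f_f_of_lt : ∀ i j, ∀ hij : G.Adj i j, i < j →
    ⁅f i, f j⁆ = -z ⟨s(i, j), G.mem_edgeSet.mpr hij⟩
  lie_e_f_of_lt : ∀ i j, ∀ hij : G.Adj i j, i < j →
    ⁅e i, f j⁆ = w ⟨s(i, j), G.mem_edgeSet.mpr hij⟩
  lie_f_e_of_lt : ∀ i j, ∀ hij : G.Adj i j, i < j →
    ⁅f i, e j⁆ = w ⟨s(i, j), G.mem_edgeSet.mpr hij⟩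
  lie_of_not_adj : ∀ i j, ¬ G.Adj i j →
    ⁅e i, e j⁆ = 0 ∧ ⁅e i, f j⁆ = 0 ∧ ⁅f i, e j⁆ = 0 ∧ ⁅f i, f j⁆ = 0
  isCentral_z : ∀ s, IsCentral (z s)
  isCentral_w : ∀ s, IsCentral (w s)

namespace IsGraphLieBasis

variable {ι V : Type*} [LinearOrder ι] [LieRing V] [LieAlgebra ℝ V] {G : SimpleGraph ι}
  {B : V →ₗ[ℝ] V →ₗ[ℝ] ℝ} {e f : ι → V} {z w : G.edgeSet → V} {T : V →ₗ[ℝ] V} {x : V} {i j k : ι}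

theorem form_f_e (h : IsGraphLieBasis G B e f z w) (i j : ι) : B (f i) (e j) = 0 := by
  rw [h.symm, h.form_e_f]

theorem form_z_e (h : IsGraphLieBasis G B e f z w) (s : G.edgeSet) (i : ι) : B (z s) (e i) = 0 := by
  rw [h.symm, h.form_e_z]

theorem form_w_e (h : IsGraphLieBasis G B e f z w) (s : G.edgeSet) (i : ι) : B (w s) (e i) = 0 := by
  rw [h.symm, h.form_e_w]

theorem form_z_f (h : IsGraphLieBasis G B e f z w) (s : G.edgeSet) (i : ι) : B (z s) (f i) = 0 := by
  rw [h.symm, h.form_f_z]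

theorem form_w_f (h : IsGraphLieBasis G B e f z w) (s : G.edgeSet) (i : ι) : B (w s) (f i) = 0 := by
  rw [h.symm, h.form_f_w]

theorem form_w_z (h : IsGraphLieBasis G B e f z w) (s t : G.edgeSet) : B (w s) (z t) = 0 := by
  rw [h.symm, h.form_z_w]

theorem form_elim (h : IsGraphLieBasis G B e f z w) (p q : (ι ⊕ ι) ⊕ (G.edgeSet ⊕ G.edgeSet)) :
    B (Sum.elim (Sum.elim e f) (Sum.elim z w) p) (Sum.elim (Sum.elim e f) (Sum.elim z w) q) =
      if p = q then 1 else 0 := by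
  rcases p with (i | i) | (s | s) <;> rcases q with (j | j) | (t | t) <;>
    simp [h.form_e_e, h.form_f_f, h.form_z_z, h.form_w_w, h.form_e_f, h.form_e_z, h.form_e_w,
      h.form_f_z, h.form_f_w, h.form_z_w, h.form_f_e, h.form_z_e, h.form_z_f,
      h.form_w_e, h.form_w_f, h.form_w_z]

/-- The vectors `e i`, `f i`, `z s`, `w s` as a basis of `V`. -/
noncomputable def basis (h : IsGraphLieBasis G B e f z w) :
    Module.Basis ((ι ⊕ ι) ⊕ (G.edgeSet ⊕ G.edgeSet)) ℝ V :=
  .mk (v := Sum.elim (Sum.elim e f) (Sum.elim z w))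
    (LinearMap.linearIndependent_of_isOrthoᵢ (B := B)
      (LinearMap.isOrthoᵢ_def.mpr fun p q hpq ↦ by rw [h.form_elim, if_neg hpq])
      fun p ↦ by simp [h.form_elim])
    (by simp only [Set.Sum.elim_range, ← Set.union_assoc, h.span_eq_top, le_refl])

@[simp]
theorem basis_apply (h : IsGraphLieBasis G B e f z w) (p : (ι ⊕ ι) ⊕ (G.edgeSet ⊕ G.edgeSet)) :
    h.basis p = Sum.elim (Sum.elim e f) (Sum.elim z w) p := by
  rw [basis, Module.Basis.mk_apply]

theorem repr_basis (h : IsGraphLieBasis G B e f z w) (x : V)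
    (p : (ι ⊕ ι) ⊕ (G.edgeSet ⊕ G.edgeSet)) : h.basis.repr x p = B x (h.basis p) := by
  suffices h.basis.coord p = B.flip (h.basis p) from LinearMap.congr_fun this x
  refine h.basis.ext fun q ↦ ?_
  rw [Module.Basis.coord_apply, Module.Basis.repr_self, Finsupp.single_apply, LinearMap.flip_apply,
    basis_apply, basis_apply, h.form_elim]

theorem eq_of_form_eq (h : IsGraphLieBasis G B e f z w) {y : V}
    (he : ∀ i, B x (e i) = B y (e i)) (hf : ∀ i, B x (f i) = B y (f i))
    (hz : ∀ s, B x (z s) = B y (z s)) (hw : ∀ s, B x (w s) = B y (w s)) : x = y := by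
  refine h.basis.ext_elem fun p ↦ ?_
  rw [h.repr_basis, h.repr_basis, basis_apply]
  rcases p with (i | i) | (s | s)
  exacts [he i, hf i, hz s, hw s]

theorem lie_f_e (h : IsGraphLieBasis G B e f z w) (i j : ι) : ⁅f i, e j⁆ = ⁅e i, f j⁆ := by
  by_cases hij : G.Adj i j
  · rcases hij.ne.lt_or_gt with hlt | hgt
    · rw [h.lie_f_e_of_lt i j hij hlt, h.lie_e_f_of_lt i j hij hlt]
    · rw [← lie_skew, ← lie_skew (e i), h.lie_f_e_of_lt j i hij.symm hgt,
        h.lie_e_f_of_lt j i hij.symm hgt]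
  · obtain ⟨-, hef, hfe, -⟩ := h.lie_of_not_adj i j hij
    rw [hfe, hef]

theorem lie_f_f (h : IsGraphLieBasis G B e f z w) (i j : ι) : ⁅f i, f j⁆ = -⁅e i, e j⁆ := by
  by_cases hij : G.Adj i j
  · rcases hij.ne.lt_or_gt with hlt | hgt
    · rw [h.lie_f_f_of_lt i j hij hlt, h.lie_e_e_of_lt i j hij hlt]
    · rw [← lie_skew, ← lie_skew (e i), h.lie_f_f_of_lt j i hij.symm hgt,
        h.lie_e_e_of_lt j i hij.symm hgt]
  · obtain ⟨hee, -, -, hff⟩ := h.lie_of_not_adj i j hij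
    rw [hff, hee, neg_zero]

theorem exists_sign_lie_eq_smul (h : IsGraphLieBasis G B e f z w) (hij : G.Adj i j) :
    ∃ ε : ℝ, ε * ε = 1 ∧ ⁅e i, e j⁆ = ε • z ⟨s(i, j), G.mem_edgeSet.mpr hij⟩ ∧
      ⁅e i, f j⁆ = ε • w ⟨s(i, j), G.mem_edgeSet.mpr hij⟩ := by
  rcases hij.ne.lt_or_gt with hlt | hgt
  · exact ⟨1, by norm_num, by rw [h.lie_e_e_of_lt i j hij hlt, one_smul],
      by rw [h.lie_e_f_of_lt i j hij hlt, one_smul]⟩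
  · have hswap : (⟨s(i, j), G.mem_edgeSet.mpr hij⟩ : G.edgeSet) =
        ⟨s(j, i), G.mem_edgeSet.mpr hij.symm⟩ := Subtype.ext Sym2.eq_swap
    refine ⟨-1, by norm_num, ?_, ?_⟩
    · rw [hswap, ← lie_skew, h.lie_e_e_of_lt j i hij.symm hgt, neg_one_smul]
    · rw [hswap, ← lie_skew, h.lie_f_e_of_lt j i hij.symm hgt, neg_one_smul]

theorem exists_eq_lie (h : IsGraphLieBasis G B e f z w) (s : G.edgeSet) :
    ∃ i j, z s = ⁅e i, e j⁆ ∧ w s = ⁅e i, f j⁆ := by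
  obtain ⟨i, j, hij, hlt, rfl⟩ := exists_adj_lt_and_edge_eq s
  exact ⟨i, j, (h.lie_e_e_of_lt i j hij hlt).symm, (h.lie_e_f_of_lt i j hij hlt).symm⟩

/-- The complex structure `e i ↦ f i`, `z s ↦ w s`, rescaled by `c` on the center. For `c = 3`
this is the tensor `T₀`. -/
noncomputable def rotation (h : IsGraphLieBasis G B e f z w) (c : ℝ) : V →ₗ[ℝ] V :=
  h.basis.constr ℝ (Sum.elim (Sum.elim f (-e)) (Sum.elim (c • w) (-(c • z))))

theorem rotation_basis (h : IsGraphLieBasis G B e f z w) (c : ℝ)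
    (p : (ι ⊕ ι) ⊕ (G.edgeSet ⊕ G.edgeSet)) : h.rotation c (h.basis p) =
      Sum.elim (Sum.elim f (-e)) (Sum.elim (c • w) (-(c • z))) p :=
  h.basis.constr_basis ℝ _ p

@[simp]
theorem rotation_e (h : IsGraphLieBasis G B e f z w) (c : ℝ) (i : ι) :
    h.rotation c (e i) = f i := by
  simpa using h.rotation_basis c (.inl (.inl i))

@[simp]
theorem rotation_f (h : IsGraphLieBasis G B e f z w) (c : ℝ) (i : ι) :
    h.rotation c (f i) = -e i := by
  simpa using h.rotation_basis c (.inl (.inr i))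

@[simp]
theorem rotation_z (h : IsGraphLieBasis G B e f z w) (c : ℝ) (s : G.edgeSet) :
    h.rotation c (z s) = c • w s := by
  simpa using h.rotation_basis c (.inr (.inl s))

@[simp]
theorem rotation_w (h : IsGraphLieBasis G B e f z w) (c : ℝ) (s : G.edgeSet) :
    h.rotation c (w s) = -(c • z s) := by
  simpa using h.rotation_basis c (.inr (.inr s))

theorem form_rotation_left (h : IsGraphLieBasis G B e f z w) (c : ℝ) (x y : V) :
    B (h.rotation c x) y = -B x (h.rotation c y) := by
  suffices B ∘ₗ h.rotation c = -B.compl₂ (h.rotation c) from LinearMap.congr_fun₂ this x y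
  refine LinearMap.ext_basis h.basis h.basis ?_
  rintro ((i | i) | (s | s)) ((j | j) | (t | t)) <;>
    simp [h.form_e_e, h.form_f_f, h.form_z_z, h.form_w_w, h.form_e_f, h.form_e_z, h.form_e_w,
      h.form_f_z, h.form_f_w, h.form_z_w, h.form_f_e, h.form_z_e, h.form_z_f,
      h.form_w_e, h.form_w_f, h.form_w_z]

theorem rotation_lie_e_e (h : IsGraphLieBasis G B e f z w) (c : ℝ) (i j : ι) :
    h.rotation c ⁅e i, e j⁆ = c • ⁅e i, f j⁆ := by
  by_cases hij : G.Adj i j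
  · obtain ⟨ε, -, hee, hef⟩ := h.exists_sign_lie_eq_smul hij
    rw [hee, hef, map_smul, rotation_z, smul_comm]
  · obtain ⟨hee, hef, -, -⟩ := h.lie_of_not_adj i j hij
    rw [hee, hef, map_zero, smul_zero]

theorem rotation_lie_e_f (h : IsGraphLieBasis G B e f z w) (c : ℝ) (i j : ι) :
    h.rotation c ⁅e i, f j⁆ = -(c • ⁅e i, e j⁆) := by
  by_cases hij : G.Adj i j
  · obtain ⟨ε, -, hee, hef⟩ := h.exists_sign_lie_eq_smul hij
    rw [hee, hef, map_smul, rotation_w, smul_neg, smul_comm]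
  · obtain ⟨hee, hef, -, -⟩ := h.lie_of_not_adj i j hij
    rw [hee, hef, map_zero, smul_zero, neg_zero]

theorem rotation_lie (h : IsGraphLieBasis G B e f z w) (c : ℝ) (x y : V) :
    h.rotation c ⁅x, y⁆ = c • ⁅h.rotation c x, y⁆ := by
  let ad : V →ₗ[ℝ] Module.End ℝ V := LieAlgebra.ad ℝ V
  suffices ad.compr₂ (h.rotation c) = c • ad ∘ₗ h.rotation c from LinearMap.congr_fun₂ this x y
  refine LinearMap.ext_basis h.basis h.basis ?_
  rintro ((i | i) | (s | s)) ((j | j) | (t | t)) <;>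
    simp [ad, h.lie_f_e, h.lie_f_f, h.rotation_lie_e_e, h.rotation_lie_e_f, h.isCentral_z _ _,
      h.isCentral_w _ _, (h.isCentral_z _).lie_right, (h.isCentral_w _).lie_right, -lie_skew]

theorem isKY_rotation (h : IsGraphLieBasis G B e f z w) : IsKY B (h.rotation 3) := by
  refine ⟨h.form_rotation_left 3, fun x hx y ↦ ?_, fun x y _ _ ↦ h.rotation_lie 3 x y⟩
  simpa [hx y] using (h.rotation_lie 3 x y).symm

theorem form_lie_e_e_lie_e_e_self (h : IsGraphLieBasis G B e f z w) (hij : G.Adj i j) :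
    B ⁅e i, e j⁆ ⁅e i, e j⁆ = 1 := by
  obtain ⟨ε, hε, hee, -⟩ := h.exists_sign_lie_eq_smul hij
  simp [hee, h.form_z_z, hε]

theorem form_lie_e_e_lie_e_e_of_ne (h : IsGraphLieBasis G B e f z w) {l : ι}
    (hne : s(i, l) ≠ s(j, k)) : B ⁅e i, e l⁆ ⁅e j, e k⁆ = 0 := by
  by_cases hil : G.Adj i l
  · by_cases hjk : G.Adj j k
    · obtain ⟨ε, -, hil_eq, -⟩ := h.exists_sign_lie_eq_smul hil
      obtain ⟨δ, -, hjk_eq, -⟩ := h.exists_sign_lie_eq_smul hjk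
      simp [hil_eq, hjk_eq, h.form_z_z, hne]
    · simp [(h.lie_of_not_adj j k hjk).1]
  · simp [(h.lie_of_not_adj i l hil).1]

theorem form_lie_e_f_lie_e_e (h : IsGraphLieBasis G B e f z w) (i l j k : ι) :
    B ⁅e i, f l⁆ ⁅e j, e k⁆ = 0 := by
  by_cases hil : G.Adj i l
  · by_cases hjk : G.Adj j k
    · obtain ⟨ε, -, -, hil_eq⟩ := h.exists_sign_lie_eq_smul hil
      obtain ⟨δ, -, hjk_eq, -⟩ := h.exists_sign_lie_eq_smul hjk
      simp [hil_eq, hjk_eq, h.form_w_z]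
    · simp [(h.lie_of_not_adj j k hjk).1]
  · simp [(h.lie_of_not_adj i l hil).2.1]

theorem form_lie_e_lie_e_e (h : IsGraphLieBasis G B e f z w) (hjk : G.Adj j k) (x : V) :
    B ⁅e j, x⁆ ⁅e j, e k⁆ = B x (e k) := by
  suffices B.flip ⁅e j, e k⁆ ∘ₗ (LieAlgebra.ad ℝ V (e j)) = B.flip (e k) from
    LinearMap.congr_fun this x
  refine h.basis.ext ?_
  rintro ((i | i) | (s | s))
  · rcases eq_or_ne i k with rfl | hik
    · simp [h.form_lie_e_e_lie_e_e_self hjk, h.form_e_e]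
    · have hne : s(j, i) ≠ s(j, k) := fun heq ↦ hik (Sym2.congr_right.mp heq)
      simp [h.form_lie_e_e_lie_e_e_of_ne hne, h.form_e_e, hik]
  · simp [h.form_lie_e_f_lie_e_e, h.form_f_e]
  · simp [(h.isCentral_z _).lie_right, h.form_z_e]
  · simp [(h.isCentral_w _).lie_right, h.form_w_e]

theorem form_lie_e_lie_e_e_of_ne (h : IsGraphLieBasis G B e f z w) (hij : i ≠ j) (hik : i ≠ k)
    (x : V) : B ⁅e i, x⁆ ⁅e j, e k⁆ = 0 := by
  have hne (l : ι) : s(i, l) ≠ s(j, k) := fun heq ↦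
    (Sym2.eq_iff.mp heq).elim (fun hl ↦ hij hl.1) (fun hl ↦ hik hl.1)
  suffices B.flip ⁅e j, e k⁆ ∘ₗ (LieAlgebra.ad ℝ V (e i)) = 0 from LinearMap.congr_fun this x
  refine h.basis.ext ?_
  rintro ((l | l) | (s | s)) <;>
    simp [h.form_lie_e_e_lie_e_e_of_ne (hne _), h.form_lie_e_f_lie_e_e,
      (h.isCentral_z _).lie_right, (h.isCentral_w _).lie_right]

theorem form_lie_lie_e_f (h : IsGraphLieBasis G B e f z w) (x y : V) (j k : ι) :
    B ⁅x, y⁆ ⁅e j, f k⁆ = -B ⁅x, h.rotation 1 y⁆ ⁅e j, e k⁆ := by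
  have hjk : ⁅e j, f k⁆ = h.rotation 1 ⁅e j, e k⁆ := by rw [h.rotation_lie_e_e, one_smul]
  have hxy : h.rotation 1 ⁅x, y⁆ = ⁅x, h.rotation 1 y⁆ := by
    rw [← lie_skew, map_neg, h.rotation_lie, one_smul, lie_skew]
  rw [hjk, ← hxy, h.form_rotation_left, neg_neg]

theorem form_lie_e_lie_e_f (h : IsGraphLieBasis G B e f z w) (hjk : G.Adj j k) (x : V) :
    B ⁅e j, x⁆ ⁅e j, f k⁆ = B x (f k) := by
  rw [h.form_lie_lie_e_f, h.form_lie_e_lie_e_e hjk, h.form_rotation_left, neg_neg, rotation_e]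

theorem form_lie_e_lie_e_f_of_ne (h : IsGraphLieBasis G B e f z w) (hij : i ≠ j) (hik : i ≠ k)
    (x : V) : B ⁅e i, x⁆ ⁅e j, f k⁆ = 0 := by
  rw [h.form_lie_lie_e_f, h.form_lie_e_lie_e_e_of_ne hij hik, neg_zero]

theorem inVperp_e (h : IsGraphLieBasis G B e f z w) (hG : ∀ i, ∃ j, G.Adj i j) (i : ι) :
    InVperp B (e i) := fun c hc ↦ by
  obtain ⟨j, hij⟩ := hG i
  rw [h.symm, ← h.form_lie_e_lie_e_e hij.symm, hc.lie_right, map_zero, LinearMap.zero_apply]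

theorem inVperp_f (h : IsGraphLieBasis G B e f z w) (hG : ∀ i, ∃ j, G.Adj i j) (i : ι) :
    InVperp B (f i) := fun c hc ↦ by
  obtain ⟨j, hij⟩ := hG i
  rw [h.symm, ← h.form_lie_e_lie_e_f hij.symm, hc.lie_right, map_zero, LinearMap.zero_apply]

theorem eq_zero_of_forall_lie_e_eq_zero (h : IsGraphLieBasis G B e f z w)
    (hG : ∀ i, ∃ j, G.Adj i j) (hx : InVperp B x) (hlie : ∀ i, ⁅e i, x⁆ = 0) : x = 0 := by
  refine h.eq_of_form_eq (fun i ↦ ?_) (fun i ↦ ?_) (fun s ↦ ?_) (fun s ↦ ?_)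
  · obtain ⟨j, hij⟩ := hG i
    rw [← h.form_lie_e_lie_e_e hij.symm, hlie, map_zero, LinearMap.zero_apply, LinearMap.zero_apply]
  · obtain ⟨j, hij⟩ := hG i
    rw [← h.form_lie_e_lie_e_f hij.symm, hlie, map_zero, LinearMap.zero_apply, LinearMap.zero_apply]
  · rw [hx _ (h.isCentral_z s), map_zero, LinearMap.zero_apply]
  · rw [hx _ (h.isCentral_w s), map_zero, LinearMap.zero_apply]

theorem eq_zero_of_isKY_of_apply_e_eq_zero (h : IsGraphLieBasis G B e f z w)
    (hG : ∀ i, ∃ j, G.Adj i j) (hT : IsKY B T) (hTe : ∀ i, T (e i) = 0) : T = 0 := by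
  have he := h.inVperp_e hG
  have hf := h.inVperp_f hG
  have hTee (i j : ι) : T ⁅e i, e j⁆ = 0 := by
    rw [hT.apply_lie (he i) (he j), hTe, zero_lie, smul_zero]
  have hTef (i j : ι) : T ⁅e i, f j⁆ = 0 := by
    rw [hT.apply_lie (he i) (hf j), hTe, zero_lie, smul_zero]
  have hTf (i : ι) : T (f i) = 0 := by
    refine h.eq_zero_of_forall_lie_e_eq_zero hG (hT.inVperp_apply (hf i)) fun j ↦ ?_
    rw [← hT.lie_apply_left_eq (he j) (hf i), hTe, zero_lie]
  refine h.basis.ext ?_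
  rintro ((i | i) | (s | s))
  · simpa using hTe i
  · simpa using hTf i
  · obtain ⟨i, j, hz, -⟩ := h.exists_eq_lie s
    simpa [hz] using hTee i j
  · obtain ⟨i, j, -, hw⟩ := h.exists_eq_lie s
    simpa [hw] using hTef i j

theorem form_apply_e_eq_zero_of_isKY_of_ne (h : IsGraphLieBasis G B e f z w)
    (hG : ∀ i, ∃ j, G.Adj i j) (hT : IsKY B T) (hik : i ≠ k) :
    B (T (e i)) (e k) = 0 ∧ B (T (e i)) (f k) = 0 := by
  obtain ⟨j, hkj⟩ := hG k
  rw [← h.form_lie_e_lie_e_e hkj.symm, ← h.form_lie_e_lie_e_f hkj.symm]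
  rcases eq_or_ne i j with rfl | hij
  · simp [hT.lie_apply_self (h.inVperp_e hG i)]
  · have hlie : ⁅e j, T (e i)⁆ = -⁅e i, T (e j)⁆ := by
      rw [← hT.lie_apply_left_eq (h.inVperp_e hG j) (h.inVperp_e hG i), lie_skew]
    simp only [hlie, map_neg, LinearMap.neg_apply, h.form_lie_e_lie_e_e_of_ne hij hik,
      h.form_lie_e_lie_e_f_of_ne hij hik, neg_zero, and_self]

theorem apply_e_eq_smul_of_isKY (h : IsGraphLieBasis G B e f z w) (hG : ∀ i, ∃ j, G.Adj i j)
    (hT : IsKY B T) (i : ι) : T (e i) = B (T (e i)) (f i) • f i := by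
  have hTi : InVperp B (T (e i)) := hT.inVperp_apply (h.inVperp_e hG i)
  refine h.eq_of_form_eq (fun k ↦ ?_) (fun k ↦ ?_) (fun s ↦ ?_) (fun s ↦ ?_)
  · rcases eq_or_ne i k with rfl | hik
    · simp [hT.form_apply_self h.symm, h.form_f_e]
    · simp [h.form_apply_e_eq_zero_of_isKY_of_ne hG hT hik, h.form_f_e]
  · rcases eq_or_ne i k with rfl | hik
    · simp [h.form_f_f]
    · simp [h.form_apply_e_eq_zero_of_isKY_of_ne hG hT hik, h.form_f_f, hik]
  · simp [hTi _ (h.isCentral_z s), h.form_f_z]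
  · simp [hTi _ (h.isCentral_w s), h.form_f_w]

theorem form_apply_e_f_eq_of_isKY_of_adj (h : IsGraphLieBasis G B e f z w)
    (hG : ∀ i, ∃ j, G.Adj i j) (hT : IsKY B T) (hij : G.Adj i j) :
    B (T (e i)) (f i) = B (T (e j)) (f j) := by
  have hlie := hT.lie_apply_left_eq (h.inVperp_e hG i) (h.inVperp_e hG j)
  rw [h.apply_e_eq_smul_of_isKY hG hT i, h.apply_e_eq_smul_of_isKY hG hT j, smul_lie, lie_smul,
    h.lie_f_e] at hlie
  have hne : ⁅e i, f j⁆ ≠ 0 := fun h0 ↦ by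
    simpa [h0, h.form_f_f] using h.form_lie_e_lie_e_f hij (f j)
  exact smul_left_injective ℝ hne hlie

theorem killingYano_eq_span (h : IsGraphLieBasis G B e f z w) [Nontrivial ι] (hG : G.Connected) :
    killingYano B = Submodule.span ℝ {h.rotation 3} := by
  have hadj := hG.preconnected.exists_adj_of_nontrivial
  have hR : h.rotation 3 ∈ killingYano B := h.isKY_rotation
  refine le_antisymm (fun T hT ↦ ?_) ((Submodule.span_singleton_le_iff_mem _ _).mpr hR)
  obtain ⟨i₀⟩ := hG.nonempty
  refine Submodule.mem_span_singleton.mpr ⟨B (T (e i₀)) (f i₀), (sub_eq_zero.mp ?_).symm⟩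
  refine h.eq_zero_of_isKY_of_apply_e_eq_zero hadj
    (sub_mem hT (Submodule.smul_mem _ _ hR)) fun i ↦ ?_
  have hconst : B (T (e i)) (f i) = B (T (e i₀)) (f i₀) :=
    eq_of_preconnected_of_forall_adj_eq hG.preconnected
      (fun _ _ ↦ h.form_apply_e_f_eq_of_isKY_of_adj hadj hT) i i₀
  rw [LinearMap.sub_apply, LinearMap.smul_apply, rotation_e, h.apply_e_eq_smul_of_isKY hadj hT,
    hconst, sub_self]

end IsGraphLieBasis

theorem statement_14_general {ι V : Type*} [LinearOrder ι] [Nontrivial ι] {G : SimpleGraph ι}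
    (hG : G.Connected) [LieRing V] [LieAlgebra ℝ V] {B : V →ₗ[ℝ] V →ₗ[ℝ] ℝ} {e f : ι → V}
    {z w : G.edgeSet → V} (h : IsGraphLieBasis G B e f z w) :
    (∀ a : ℝ, ∃ T : V →ₗ[ℝ] V, IsKY B T ∧
        (∀ i, T (e i) = a • f i) ∧ (∀ i, T (f i) = -(a • e i)) ∧
        (∀ s, T (z s) = (3 * a) • w s) ∧ (∀ s, T (w s) = -((3 * a) • z s))) ∧
    (∀ T : V →ₗ[ℝ] V, IsKY B T → ∃! a : ℝ,
        (∀ i, T (e i) = a • f i) ∧ (∀ i, T (f i) = -(a • e i)) ∧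
        (∀ s, T (z s) = (3 * a) • w s) ∧ (∀ s, T (w s) = -((3 * a) • z s))) := by
  have hky (T : V →ₗ[ℝ] V) : IsKY B T ↔ ∃ a : ℝ, a • h.rotation 3 = T := by
    rw [← mem_killingYano, h.killingYano_eq_span hG, Submodule.mem_span_singleton]
  refine ⟨fun a ↦ ⟨a • h.rotation 3, (hky _).mpr ⟨a, rfl⟩, ?_⟩, fun T hT ↦ ?_⟩
  · simp [smul_smul, mul_comm]
  obtain ⟨a, rfl⟩ := (hky T).mp hT
  refine ⟨a, by simp [smul_smul, mul_comm], fun b hb ↦ ?_⟩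
  obtain ⟨i⟩ := hG.nonempty
  simpa [h.form_f_f] using (congrArg (B · (f i)) (hb.1 i)).symm

/-- for a connected graph G, the space of KY tensors on the metric Lie
algebra 𝔫_G is one-dimensional, spanned by T₀ with T₀e_i = f_i, T₀f_i = -e_i,
T₀z_s = 3w_s, T₀w_s = -3z_s. -/
theorem statement_14
    (n : ℕ) (hn : 2 ≤ n) (G : SimpleGraph (Fin n))
    (hconn : G.Connected) (hE : G.edgeSet.Nonempty)
    (V : Type*) [LieRing V] [LieAlgebra ℝ V]
    (B : V →ₗ[ℝ] V →ₗ[ℝ] ℝ)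
    (hsymm : ∀ x y : V, B x y = B y x) (hpos : ∀ x : V, x ≠ 0 → 0 < B x x)
    (e f : Fin n → V) (z w : G.edgeSet → V)
    -- the basis {e i, f i, z s, w s} is orthonormal
    (hee : ∀ i j, B (e i) (e j) = if i = j then 1 else 0)
    (hff : ∀ i j, B (f i) (f j) = if i = j then 1 else 0)
    (hzz : ∀ s t, B (z s) (z t) = if s = t then 1 else 0)
    (hww : ∀ s t, B (w s) (w t) = if s = t then 1 else 0)
    (hef : ∀ i j, B (e i) (f j) = 0)
    (hez : ∀ i s, B (e i) (z s) = 0)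
    (hew : ∀ i s, B (e i) (w s) = 0)
    (hfz : ∀ i s, B (f i) (z s) = 0)
    (hfw : ∀ i s, B (f i) (w s) = 0)
    (hzw : ∀ s t, B (z s) (w t) = 0)
    -- ... and spans V
    (hspan : Submodule.span ℝ
      (Set.range e ∪ Set.range f ∪ Set.range z ∪ Set.range w) = ⊤)
    -- the bracket relations of the Lie algebra 𝔫_G
    (hbee : ∀ i j, ∀ h : G.Adj i j, i < j →
        ⁅e i, e j⁆ = z ⟨s(i, j), G.mem_edgeSet.mpr h⟩)
    (hbff : ∀ i j, ∀ h : G.Adj i j, i < j →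
        ⁅f i, f j⁆ = -z ⟨s(i, j), G.mem_edgeSet.mpr h⟩)
    (hbef : ∀ i j, ∀ h : G.Adj i j, i < j →
        ⁅e i, f j⁆ = w ⟨s(i, j), G.mem_edgeSet.mpr h⟩)
    (hbfe : ∀ i j, ∀ h : G.Adj i j, i < j →
        ⁅f i, e j⁆ = w ⟨s(i, j), G.mem_edgeSet.mpr h⟩)
    (hnadj : ∀ i j, ¬ G.Adj i j →
        ⁅e i, e j⁆ = 0 ∧ ⁅e i, f j⁆ = 0 ∧ ⁅f i, e j⁆ = 0 ∧ ⁅f i, f j⁆ = 0)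
    (hzc : ∀ s, IsCentral (z s)) (hwc : ∀ s, IsCentral (w s)) :
    (∀ a : ℝ, ∃ T : V →ₗ[ℝ] V, IsKY B T ∧
        (∀ i, T (e i) = a • f i) ∧ (∀ i, T (f i) = -(a • e i)) ∧
        (∀ s, T (z s) = (3 * a) • w s) ∧ (∀ s, T (w s) = -((3 * a) • z s))) ∧
    (∀ T : V →ₗ[ℝ] V, IsKY B T → ∃! a : ℝ,
        (∀ i, T (e i) = a • f i) ∧ (∀ i, T (f i) = -(a • e i)) ∧
        (∀ s, T (z s) = (3 * a) • w s) ∧ (∀ s, T (w s) = -((3 * a) • z s))) := by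
  have : Nontrivial (Fin n) := Fin.nontrivial_iff_two_le.mpr hn
  exact statement_14_general (B := B) hconn ⟨hsymm, hee, hff, hzz, hww, hef, hez, hew, hfz, hfw,
    hzw, hspan, hbee, hbff, hbef, hbfe, hnadj, hzc, hwc⟩
end

section
/- Let G be a connected simple graph on the vertex set {1,…,n} (n ≥ 2) with non-empty edge set E, and let (𝔫_G, ⟨·,·⟩) be the associated real metric Lie algebra. Then every non-zero Killing–Yano tensor on (𝔫_G, ⟨·,·⟩) is invertible. -/
/-!
The brackets of `𝔫_G` are those of a complex Lie algebra: identify the planes `⟨e_i, f_i⟩` and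
`⟨z_s, w_s⟩` with `ℂ`, sending `e_i, z_s` to `1` and `f_i, w_s` to `I`. With complex coordinates
`x_i` on `𝔳`, the component of `⁅u, v⁆` along an edge `{i, j}` is the minor
`x_i(u) x_j(v) - x_j(u) x_i(v)`. A Killing–Yano tensor `T` satisfies `⁅Tx, y⁆ = ⁅x, Ty⁆` on `𝔳`;
comparing minors shows that `T` is diagonal there, with entries that are complex multiplications
and agree at adjacent vertices. By connectedness `T` is multiplication by one complex number `c`
on `𝔳`, hence by `3c` on `𝔷`.
-/

section KillingYano

variable {V : Type*} [LieRing V] [LieAlgebra ℝ V] {B : V →ₗ[ℝ] V →ₗ[ℝ] ℝ} {T : V →ₗ[ℝ] V}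

theorem IsKY.inVperp_map (hT : IsKY B T) {x : V} (hx : InVperp B x) : InVperp B (T x) := by
  intro z hz
  rw [hT.1, hx _ (hT.2.1 z hz), neg_zero]

theorem IsKY.lie_map_left_eq_lie_map_right (hT : IsKY B T) {x y : V}
    (hx : InVperp B x) (hy : InVperp B y) : ⁅T x, y⁆ = ⁅x, T y⁆ := by
  refine smul_right_injective V (three_ne_zero (α := ℝ)) ?_
  calc (3 : ℝ) • ⁅T x, y⁆ = T ⁅x, y⁆ := (hT.2.2 x y hx hy).symm
    _ = -T ⁅y, x⁆ := by rw [← lie_skew, map_neg]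
    _ = (3 : ℝ) • ⁅x, T y⁆ := by rw [hT.2.2 y x hy hx, ← smul_neg, lie_skew]

end KillingYano

theorem injective_of_skew_of_anisotropic_of_surjective {R V : Type*} [CommRing R] [AddCommGroup V]
    [Module R V] {B : V →ₗ[R] V →ₗ[R] R} (haniso : ∀ x, B x x = 0 → x = 0)
    {T : V →ₗ[R] V} (hskew : ∀ x y, B (T x) y = -B x (T y)) (hsurj : Function.Surjective T) :
    Function.Injective T := by
  refine (injective_iff_map_eq_zero T).mpr fun x hx => ?_
  obtain ⟨y, rfl⟩ := hsurj x
  exact haniso _ (by rw [hskew, hx, map_zero, neg_zero])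

section ComplexPlane

variable {V : Type*} [AddCommGroup V] [Module ℝ V]

/-- The real-linear map `ℂ → V` sending `1` to `a` and `I` to `b`; it identifies the plane spanned
by an orthonormal pair `a, b` with `ℂ`. -/
noncomputable def complexVec (a b : V) : ℂ →ₗ[ℝ] V :=
  Complex.reLm.smulRight a + Complex.imLm.smulRight b

theorem complexVec_apply (a b : V) (c : ℂ) : complexVec a b c = c.re • a + c.im • b := rfl

/-- The complex number whose real and imaginary parts are the components of a vector along `a` and
`b`; for an orthonormal pair it is a left inverse of `complexVec a b`. -/
noncomputable def complexCoord (B : V →ₗ[ℝ] V →ₗ[ℝ] ℝ) (a b : V) : V →ₗ[ℝ] ℂ :=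
  (B.flip a).smulRight 1 + (B.flip b).smulRight Complex.I

theorem complexCoord_apply (B : V →ₗ[ℝ] V →ₗ[ℝ] ℝ) (a b u : V) :
    complexCoord B a b u = ⟨B u a, B u b⟩ := by
  apply Complex.ext <;> simp [complexCoord]

/-- Here `r = 1` for a single orthonormal pair, and `r = 0` for two orthogonal planes. -/
theorem complexCoord_complexVec {B : V →ₗ[ℝ] V →ₗ[ℝ] ℝ} {a b a' b' : V} {r : ℝ}
    (haa : B a a' = r) (hab : B a b' = 0) (hba : B b a' = 0) (hbb : B b b' = r) (c : ℂ) :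
    complexCoord B a' b' (complexVec a b c) = r • c := by
  apply Complex.ext <;>
    simp [complexVec_apply, complexCoord_apply, haa, hab, hba, hbb, mul_comm]

theorem complexCoord_eq_zero_iff {B : V →ₗ[ℝ] V →ₗ[ℝ] ℝ} {a b u : V} :
    complexCoord B a b u = 0 ↔ B u a = 0 ∧ B u b = 0 := by
  rw [complexCoord_apply, Complex.ext_iff, Complex.zero_re, Complex.zero_im]

end ComplexPlane

section Graph

theorem eq_of_reachable_of_adj_eq {ι α : Type*} {G : SimpleGraph ι} {a : ι → α}
    (ha : ∀ i j, G.Adj i j → a i = a j) {i j : ι} (h : G.Reachable i j) : a i = a j := by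
  obtain ⟨p⟩ := h
  induction p with
  | nil => rfl
  | cons hadj _ ih => exact (ha _ _ hadj).trans ih

theorem exists_adj_lt_eq_mk {ι : Type*} [LinearOrder ι] {G : SimpleGraph ι} (s : G.edgeSet) :
    ∃ i j, ∃ h : G.Adj i j, i < j ∧ s = ⟨s(i, j), G.mem_edgeSet.mpr h⟩ := by
  obtain ⟨s, hs⟩ := s
  induction s using Sym2.ind with
  | _ i j =>
    have h : G.Adj i j := hs
    rcases h.ne.lt_or_gt with hlt | hgt
    · exact ⟨i, j, h, hlt, rfl⟩
    · exact ⟨j, i, h.symm, hgt, Subtype.ext Sym2.eq_swap⟩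

end Graph

/-- A realization of the metric Lie algebra `𝔫_G` on `V`: an inner product `form`, and an
orthonormal basis `e, f, z, w` with the bracket relations of `𝔫_G`. The linear order on the vertices
orients the edges; no finiteness is assumed. -/
structure GraphLieFrame {ι : Type*} [LinearOrder ι] (G : SimpleGraph ι)
    (V : Type*) [LieRing V] [LieAlgebra ℝ V] where
  form : V →ₗ[ℝ] V →ₗ[ℝ] ℝ
  form_symm : ∀ x y, form x y = form y x
  form_pos : ∀ x, x ≠ 0 → 0 < form x x
  e : ι → V
  f : ι → V
  z : G.edgeSet → V
  w : G.edgeSet → V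
  form_e_e : ∀ i j, form (e i) (e j) = if i = j then 1 else 0
  form_f_f : ∀ i j, form (f i) (f j) = if i = j then 1 else 0
  form_z_z : ∀ s t, form (z s) (z t) = if s = t then 1 else 0
  form_w_w : ∀ s t, form (w s) (w t) = if s = t then 1 else 0
  form_e_f : ∀ i j, form (e i) (f j) = 0
  form_e_z : ∀ i s, form (e i) (z s) = 0
  form_e_w : ∀ i s, form (e i) (w s) = 0
  form_f_z : ∀ i s, form (f i) (z s) = 0
  form_f_w : ∀ i s, form (f i) (w s) = 0
  form_z_w : ∀ s t, form (z s) (w t) = 0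
  span_eq_top : Submodule.span ℝ (Set.range e ∪ Set.range f ∪ Set.range z ∪ Set.range w) = ⊤
  lie_e_e : ∀ i j, ∀ h : G.Adj i j, i < j → ⁅e i, e j⁆ = z ⟨s(i, j), G.mem_edgeSet.mpr h⟩
  lie_f_f : ∀ i j, ∀ h : G.Adj i j, i < j → ⁅f i, f j⁆ = -z ⟨s(i, j), G.mem_edgeSet.mpr h⟩
  lie_e_f : ∀ i j, ∀ h : G.Adj i j, i < j → ⁅e i, f j⁆ = w ⟨s(i, j), G.mem_edgeSet.mpr h⟩
  lie_f_e : ∀ i j, ∀ h : G.Adj i j, i < j → ⁅f i, e j⁆ = w ⟨s(i, j), G.mem_edgeSet.mpr h⟩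
  lie_of_not_adj : ∀ i j, ¬G.Adj i j →
    ⁅e i, e j⁆ = 0 ∧ ⁅e i, f j⁆ = 0 ∧ ⁅f i, e j⁆ = 0 ∧ ⁅f i, f j⁆ = 0
  isCentral_z : ∀ s, IsCentral (z s)
  isCentral_w : ∀ s, IsCentral (w s)

namespace GraphLieFrame

variable {ι : Type*} [LinearOrder ι] {G : SimpleGraph ι} {V : Type*} [LieRing V] [LieAlgebra ℝ V]
  (F : GraphLieFrame G V)

/-- The plane `⟨e_i, f_i⟩` parametrized by `ℂ`. -/
noncomputable def vertexVec (i : ι) : ℂ →ₗ[ℝ] V := complexVec (F.e i) (F.f i)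

/-- The plane `⟨z_s, w_s⟩` parametrized by `ℂ`. -/
noncomputable def edgeVec (s : G.edgeSet) : ℂ →ₗ[ℝ] V := complexVec (F.z s) (F.w s)

/-- The complex coordinate along `⟨e_i, f_i⟩`. -/
noncomputable def vertexCoord (i : ι) : V →ₗ[ℝ] ℂ := complexCoord F.form (F.e i) (F.f i)

/-- The complex coordinate along `⟨z_s, w_s⟩`. -/
noncomputable def edgeCoord (s : G.edgeSet) : V →ₗ[ℝ] ℂ := complexCoord F.form (F.z s) (F.w s)

theorem vertexCoord_vertexVec (i j : ι) (c : ℂ) :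
    F.vertexCoord i (F.vertexVec j c) = if j = i then c else 0 := by
  have hfe : F.form (F.f j) (F.e i) = 0 := by rw [F.form_symm, F.form_e_f]
  rw [vertexCoord, vertexVec,
    complexCoord_complexVec (F.form_e_e j i) (F.form_e_f j i) hfe (F.form_f_f j i),
    ite_smul, one_smul, zero_smul]

theorem vertexCoord_edgeVec (i : ι) (s : G.edgeSet) (c : ℂ) :
    F.vertexCoord i (F.edgeVec s c) = 0 := by
  rw [vertexCoord, edgeVec, complexCoord_complexVec (r := 0), zero_smul] <;> rw [F.form_symm]
  exacts [F.form_e_z i s, F.form_f_z i s, F.form_e_w i s, F.form_f_w i s]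

theorem edgeCoord_vertexVec (s : G.edgeSet) (i : ι) (c : ℂ) :
    F.edgeCoord s (F.vertexVec i c) = 0 := by
  rw [edgeCoord, vertexVec, complexCoord_complexVec (F.form_e_z i s) (F.form_e_w i s)
    (F.form_f_z i s) (F.form_f_w i s), zero_smul]

theorem edgeCoord_edgeVec (s t : G.edgeSet) (c : ℂ) :
    F.edgeCoord s (F.edgeVec t c) = if t = s then c else 0 := by
  have hwz : F.form (F.w t) (F.z s) = 0 := by rw [F.form_symm, F.form_z_w]
  rw [edgeCoord, edgeVec,
    complexCoord_complexVec (F.form_z_z t s) (F.form_z_w t s) hwz (F.form_w_w t s),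
    ite_smul, one_smul, zero_smul]

theorem vec_induction {p : V → Prop} (vertex : ∀ i c, p (F.vertexVec i c))
    (edge : ∀ s c, p (F.edgeVec s c)) (zero : p 0) (add : ∀ u v, p u → p v → p (u + v)) (u : V) :
    p u := by
  have hu : u ∈ Submodule.span ℝ
      (Set.range F.e ∪ Set.range F.f ∪ Set.range F.z ∪ Set.range F.w) := by
    rw [F.span_eq_top]; exact Submodule.mem_top
  induction hu using Submodule.closure_induction with
  | zero => exact zero
  | add u v _ _ hu hv => exact add u v hu hv
  | smul_mem r u hu =>
    rcases hu with ((⟨i, rfl⟩ | ⟨i, rfl⟩) | ⟨s, rfl⟩) | ⟨s, rfl⟩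
    · simpa [vertexVec, complexVec_apply] using vertex i r
    · simpa [vertexVec, complexVec_apply] using vertex i (r * Complex.I)
    · simpa [edgeVec, complexVec_apply] using edge s r
    · simpa [edgeVec, complexVec_apply] using edge s (r * Complex.I)

theorem eq_zero_of_form_self_eq_zero {u : V} (hu : F.form u u = 0) : u = 0 :=
  by_contra fun hne => (F.form_pos u hne).ne' hu

theorem eq_zero_of_coord_eq_zero {u : V} (hvertex : ∀ i, F.vertexCoord i u = 0)
    (hedge : ∀ s, F.edgeCoord s u = 0) : u = 0 := by
  have hform : ∀ v, F.form u v = 0 := by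
    refine F.vec_induction (fun i c => ?_) (fun s c => ?_) (map_zero _) fun v v' hv hv' => ?_
    · simp [vertexVec, complexVec_apply, complexCoord_eq_zero_iff.mp (hvertex i)]
    · simp [edgeVec, complexVec_apply, complexCoord_eq_zero_iff.mp (hedge s)]
    · rw [map_add, hv, hv', add_zero]
  exact F.eq_zero_of_form_self_eq_zero (hform u)

theorem ext_coord {u v : V} (hvertex : ∀ i, F.vertexCoord i u = F.vertexCoord i v)
    (hedge : ∀ s, F.edgeCoord s u = F.edgeCoord s v) : u = v :=
  sub_eq_zero.mp <| F.eq_zero_of_coord_eq_zero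
    (fun i => by rw [map_sub, hvertex, sub_self]) (fun s => by rw [map_sub, hedge, sub_self])

theorem isCentral_edgeVec (s : G.edgeSet) (c : ℂ) : IsCentral (F.edgeVec s c) := fun v => by
  rw [edgeVec, complexVec_apply, add_lie, smul_lie, smul_lie, F.isCentral_z s v, F.isCentral_w s v,
    smul_zero, smul_zero, add_zero]

theorem edgeCoord_eq_zero_of_inVperp {u : V} (hu : InVperp F.form u) (s : G.edgeSet) :
    F.edgeCoord s u = 0 :=
  complexCoord_eq_zero_iff.mpr ⟨hu _ (F.isCentral_z s), hu _ (F.isCentral_w s)⟩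

theorem lie_vertexVec_of_lt {i j : ι} (h : G.Adj i j) (hlt : i < j) (c d : ℂ) :
    ⁅F.vertexVec i c, F.vertexVec j d⁆ = F.edgeVec ⟨s(i, j), G.mem_edgeSet.mpr h⟩ (c * d) := by
  simp only [vertexVec, edgeVec, complexVec_apply, add_lie, lie_add, smul_lie, lie_smul,
    F.lie_e_e i j h hlt, F.lie_e_f i j h hlt, F.lie_f_e i j h hlt, F.lie_f_f i j h hlt,
    Complex.mul_re, Complex.mul_im]
  module

theorem lie_vertexVec_of_not_adj {i j : ι} (h : ¬G.Adj i j) (c d : ℂ) :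
    ⁅F.vertexVec i c, F.vertexVec j d⁆ = 0 := by
  obtain ⟨hee, hef, hfe, hff⟩ := F.lie_of_not_adj i j h
  simp [vertexVec, complexVec_apply, hee, hef, hfe, hff]

/-- The `2 × 2` minor `x_i(u) x_j(v) - x_j(u) x_i(v)` of the complex vertex coordinates; along an
edge it is a component of `⁅u, v⁆`. -/
noncomputable def minor (i j : ι) (u v : V) : ℂ :=
  F.vertexCoord i u * F.vertexCoord j v - F.vertexCoord j u * F.vertexCoord i v

theorem edgeCoord_lie_vertexVec_of_lt {i j k l : ι} (h : G.Adj i j) (hlt : i < j) (hkl : k < l)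
    (c d : ℂ) :
    F.edgeCoord ⟨s(i, j), G.mem_edgeSet.mpr h⟩ ⁅F.vertexVec k c, F.vertexVec l d⁆ =
      F.minor i j (F.vertexVec k c) (F.vertexVec l d) := by
  simp only [minor, vertexCoord_vertexVec]
  by_cases hadj : G.Adj k l
  · rw [F.lie_vertexVec_of_lt hadj hkl, edgeCoord_edgeVec]
    simp only [Subtype.mk.injEq, Sym2.eq_iff]
    grind
  · rw [F.lie_vertexVec_of_not_adj hadj, map_zero]
    grind [G.adj_comm]

theorem edgeCoord_lie {i j : ι} (h : G.Adj i j) (hlt : i < j) (u v : V) :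
    F.edgeCoord ⟨s(i, j), G.mem_edgeSet.mpr h⟩ ⁅u, v⁆ = F.minor i j u v := by
  induction u using F.vec_induction with
  | zero => simp [minor]
  | add u u' hu hu' => rw [add_lie, map_add, hu, hu']; simp only [minor, map_add]; ring
  | edge s c => simp [minor, F.isCentral_edgeVec s c v, vertexCoord_edgeVec]
  | vertex k c =>
    induction v using F.vec_induction with
    | zero => simp [minor]
    | add v v' hv hv' => rw [lie_add, map_add, hv, hv']; simp only [minor, map_add]; ring
    | edge s d =>
      rw [← lie_skew, F.isCentral_edgeVec s d]
      simp [minor, vertexCoord_edgeVec]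
    | vertex l d =>
      rcases lt_trichotomy k l with hkl | rfl | hlk
      · exact F.edgeCoord_lie_vertexVec_of_lt h hlt hkl c d
      · rw [F.lie_vertexVec_of_not_adj G.irrefl, map_zero]
        simp only [minor, vertexCoord_vertexVec]
        grind
      · rw [← lie_skew, map_neg, F.edgeCoord_lie_vertexVec_of_lt h hlt hlk d c]
        simp only [minor]
        ring

theorem minor_eq_of_lie_eq {i j : ι} (h : G.Adj i j) {u v u' v' : V} (huv : ⁅u, v⁆ = ⁅u', v'⁆) :
    F.minor i j u v = F.minor i j u' v' := by
  rcases h.ne.lt_or_gt with hlt | hgt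
  · rw [← F.edgeCoord_lie h hlt, ← F.edgeCoord_lie h hlt, huv]
  · have hswap : F.minor j i u v = F.minor j i u' v' := by
      rw [← F.edgeCoord_lie h.symm hgt, ← F.edgeCoord_lie h.symm hgt, huv]
    simp only [minor] at hswap ⊢
    linear_combination -hswap

theorem vertexCoord_eq_zero_of_isCentral {i j : ι} (h : G.Adj i j) {u : V} (hu : IsCentral u) :
    F.vertexCoord i u = 0 := by
  have hlie : ⁅u, F.vertexVec j 1⁆ = ⁅(0 : V), 0⁆ := by rw [hu, lie_zero]
  simpa [minor, vertexCoord_vertexVec, h.ne'] using F.minor_eq_of_lie_eq h hlie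

theorem inVperp_vertexVec {i j : ι} (h : G.Adj i j) (c : ℂ) :
    InVperp F.form (F.vertexVec i c) := by
  intro u hu
  obtain ⟨he, hf⟩ := complexCoord_eq_zero_iff.mp (F.vertexCoord_eq_zero_of_isCentral h hu)
  rw [F.form_symm, vertexVec, complexVec_apply, map_add, map_smul, map_smul, he, hf, smul_zero,
    smul_zero, add_zero]

section KillingYano

variable {F} {T : V →ₗ[ℝ] V}

theorem minor_map_vertexVec (hT : IsKY F.form T) (hnbr : ∀ i, ∃ j, G.Adj i j) {k l : ι}
    (h : G.Adj k l) (i j : ι) (c d : ℂ) :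
    F.minor k l (T (F.vertexVec i c)) (F.vertexVec j d) =
      F.minor k l (F.vertexVec i c) (T (F.vertexVec j d)) := by
  obtain ⟨i', hi⟩ := hnbr i
  obtain ⟨j', hj⟩ := hnbr j
  exact F.minor_eq_of_lie_eq h <|
    hT.lie_map_left_eq_lie_map_right (F.inVperp_vertexVec hi c) (F.inVperp_vertexVec hj d)

theorem vertexCoord_map_vertexVec_of_ne (hT : IsKY F.form T) (hnbr : ∀ i, ∃ j, G.Adj i j)
    {i k : ι} (hik : i ≠ k) (c : ℂ) : F.vertexCoord k (T (F.vertexVec i c)) = 0 := by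
  obtain ⟨j, hkj⟩ := hnbr k
  rcases eq_or_ne c 0 with rfl | hc
  · simp
  have hminor := minor_map_vertexVec hT hnbr hkj i j c c
  simp only [minor, vertexCoord_vertexVec, hkj.ne', hik, if_true, if_false] at hminor
  rcases eq_or_ne i j with rfl | hij
  · refine (mul_eq_zero.mp ?_).resolve_right hc
    rw [if_pos rfl] at hminor
    linear_combination hminor / 2
  · simpa [hij, hc] using hminor

theorem vertexCoord_map_vertexVec_mul (hT : IsKY F.form T) (hnbr : ∀ i, ∃ j, G.Adj i j) {i j : ι}
    (h : G.Adj i j) (c d : ℂ) :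
    F.vertexCoord i (T (F.vertexVec i c)) * d = c * F.vertexCoord j (T (F.vertexVec j d)) := by
  simpa [minor, vertexCoord_vertexVec, h.ne, h.ne'] using minor_map_vertexVec hT hnbr h i j c d

theorem exists_vertexCoord_map_vertexVec_eq (hG : G.Connected) (hT : IsKY F.form T)
    (hnbr : ∀ i, ∃ j, G.Adj i j) :
    ∃ γ : ℂ, ∀ i c, F.vertexCoord i (T (F.vertexVec i c)) = γ * c := by
  have hconst : ∀ i j, F.vertexCoord i (T (F.vertexVec i 1)) =
      F.vertexCoord j (T (F.vertexVec j 1)) := fun i j =>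
    eq_of_reachable_of_adj_eq
      (fun k l h => by simpa using vertexCoord_map_vertexVec_mul hT hnbr h 1 1)
      (hG.preconnected i j)
  obtain ⟨o⟩ := hG.nonempty
  refine ⟨F.vertexCoord o (T (F.vertexVec o 1)), fun i c => ?_⟩
  obtain ⟨j, hij⟩ := hnbr i
  calc F.vertexCoord i (T (F.vertexVec i c))
      = c * F.vertexCoord j (T (F.vertexVec j 1)) := by
        simpa using vertexCoord_map_vertexVec_mul hT hnbr hij c 1
    _ = F.vertexCoord o (T (F.vertexVec o 1)) * c := by rw [hconst j o, mul_comm]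

theorem map_vertexVec (hT : IsKY F.form T) (hnbr : ∀ i, ∃ j, G.Adj i j) {γ : ℂ}
    (hγ : ∀ i c, F.vertexCoord i (T (F.vertexVec i c)) = γ * c) (i : ι) (c : ℂ) :
    T (F.vertexVec i c) = F.vertexVec i (γ * c) := by
  obtain ⟨j, hij⟩ := hnbr i
  refine F.ext_coord (fun k => ?_) fun s => ?_
  · rw [vertexCoord_vertexVec]
    split_ifs with hik
    · rw [← hik, hγ]
    · exact vertexCoord_map_vertexVec_of_ne hT hnbr hik c
  · rw [edgeCoord_vertexVec]
    exact F.edgeCoord_eq_zero_of_inVperp (hT.inVperp_map (F.inVperp_vertexVec hij c)) s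

theorem map_edgeVec (hT : IsKY F.form T) {γ : ℂ}
    (hγ : ∀ i c, T (F.vertexVec i c) = F.vertexVec i (γ * c)) (s : G.edgeSet) (c : ℂ) :
    T (F.edgeVec s c) = F.edgeVec s (3 * γ * c) := by
  obtain ⟨i, j, h, hlt, rfl⟩ := exists_adj_lt_eq_mk s
  calc T (F.edgeVec ⟨s(i, j), G.mem_edgeSet.mpr h⟩ c)
      = T ⁅F.vertexVec i c, F.vertexVec j 1⁆ := by rw [F.lie_vertexVec_of_lt h hlt, mul_one]
    _ = (3 : ℝ) • ⁅F.vertexVec i (γ * c), F.vertexVec j 1⁆ := by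
      rw [hT.2.2 _ _ (F.inVperp_vertexVec h c) (F.inVperp_vertexVec h.symm 1), hγ]
    _ = F.edgeVec ⟨s(i, j), G.mem_edgeSet.mpr h⟩ (3 * γ * c) := by
      rw [F.lie_vertexVec_of_lt h hlt, mul_one, ← map_smul, Complex.real_smul, mul_assoc]
      norm_num

theorem exists_map_vec_eq (hG : G.Connected) (hT : IsKY F.form T)
    (hnbr : ∀ i, ∃ j, G.Adj i j) :
    ∃ γ : ℂ, (∀ i c, T (F.vertexVec i c) = F.vertexVec i (γ * c)) ∧
      ∀ s c, T (F.edgeVec s c) = F.edgeVec s (3 * γ * c) := by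
  obtain ⟨γ, hγ⟩ := exists_vertexCoord_map_vertexVec_eq hG hT hnbr
  have hvertex := map_vertexVec hT hnbr hγ
  exact ⟨γ, hvertex, map_edgeVec hT hvertex⟩

end KillingYano

theorem eq_zero_of_map_vec_eq_zero {T : V →ₗ[ℝ] V} (hvertex : ∀ i c, T (F.vertexVec i c) = 0)
    (hedge : ∀ s c, T (F.edgeVec s c) = 0) : T = 0 :=
  LinearMap.ext <| F.vec_induction hvertex hedge (map_zero T) fun u v hu hv => by
    rw [map_add, hu, hv, map_add]

theorem surjective_of_map_vec {T : V →ₗ[ℝ] V} {α β : ℂ} (hα : α ≠ 0) (hβ : β ≠ 0)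
    (hvertex : ∀ i c, T (F.vertexVec i c) = F.vertexVec i (α * c))
    (hedge : ∀ s c, T (F.edgeVec s c) = F.edgeVec s (β * c)) : Function.Surjective T := by
  refine F.vec_induction (fun i c => ⟨F.vertexVec i (α⁻¹ * c), ?_⟩)
    (fun s c => ⟨F.edgeVec s (β⁻¹ * c), ?_⟩) ⟨0, map_zero T⟩ ?_
  · rw [hvertex, mul_inv_cancel_left₀ hα]
  · rw [hedge, mul_inv_cancel_left₀ hβ]
  · rintro _ _ ⟨u, rfl⟩ ⟨v, rfl⟩
    exact ⟨u + v, map_add T u v⟩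

end GraphLieFrame

theorem statement_15_general {ι : Type*} [LinearOrder ι] [Nontrivial ι] {G : SimpleGraph ι}
    (hG : G.Connected) {V : Type*} [LieRing V] [LieAlgebra ℝ V] (F : GraphLieFrame G V) :
    ∀ T : V →ₗ[ℝ] V, IsKY F.form T → T ≠ 0 → Function.Bijective T := by
  intro T hT hT0
  obtain ⟨γ, hvertex, hedge⟩ :=
    GraphLieFrame.exists_map_vec_eq hG hT hG.preconnected.exists_adj_of_nontrivial
  have hγ : γ ≠ 0 := by
    rintro rfl
    exact hT0 (F.eq_zero_of_map_vec_eq_zero (by simpa using hvertex) (by simpa using hedge))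
  have hsurj := F.surjective_of_map_vec hγ (mul_ne_zero three_ne_zero hγ) hvertex hedge
  exact ⟨injective_of_skew_of_anisotropic_of_surjective
    (fun _ => F.eq_zero_of_form_self_eq_zero) hT.1 hsurj, hsurj⟩

/-- for a connected graph G, every non-zero KY tensor on the metric
Lie algebra 𝔫_G is invertible. -/
theorem statement_15
    (n : ℕ) (hn : 2 ≤ n) (G : SimpleGraph (Fin n))
    (hconn : G.Connected) (hE : G.edgeSet.Nonempty)
    (V : Type*) [LieRing V] [LieAlgebra ℝ V]
    (B : V →ₗ[ℝ] V →ₗ[ℝ] ℝ)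
    (hsymm : ∀ x y : V, B x y = B y x) (hpos : ∀ x : V, x ≠ 0 → 0 < B x x)
    (e f : Fin n → V) (z w : G.edgeSet → V)
    -- the basis {e i, f i, z s, w s} is orthonormal
    (hee : ∀ i j, B (e i) (e j) = if i = j then 1 else 0)
    (hff : ∀ i j, B (f i) (f j) = if i = j then 1 else 0)
    (hzz : ∀ s t, B (z s) (z t) = if s = t then 1 else 0)
    (hww : ∀ s t, B (w s) (w t) = if s = t then 1 else 0)
    (hef : ∀ i j, B (e i) (f j) = 0)
    (hez : ∀ i s, B (e i) (z s) = 0)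
    (hew : ∀ i s, B (e i) (w s) = 0)
    (hfz : ∀ i s, B (f i) (z s) = 0)
    (hfw : ∀ i s, B (f i) (w s) = 0)
    (hzw : ∀ s t, B (z s) (w t) = 0)
    -- ... and spans V
    (hspan : Submodule.span ℝ
      (Set.range e ∪ Set.range f ∪ Set.range z ∪ Set.range w) = ⊤)
    -- the bracket relations of the Lie algebra 𝔫_G
    (hbee : ∀ i j, ∀ h : G.Adj i j, i < j →
        ⁅e i, e j⁆ = z ⟨s(i, j), G.mem_edgeSet.mpr h⟩)
    (hbff : ∀ i j, ∀ h : G.Adj i j, i < j →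
        ⁅f i, f j⁆ = -z ⟨s(i, j), G.mem_edgeSet.mpr h⟩)
    (hbef : ∀ i j, ∀ h : G.Adj i j, i < j →
        ⁅e i, f j⁆ = w ⟨s(i, j), G.mem_edgeSet.mpr h⟩)
    (hbfe : ∀ i j, ∀ h : G.Adj i j, i < j →
        ⁅f i, e j⁆ = w ⟨s(i, j), G.mem_edgeSet.mpr h⟩)
    (hnadj : ∀ i j, ¬ G.Adj i j →
        ⁅e i, e j⁆ = 0 ∧ ⁅e i, f j⁆ = 0 ∧ ⁅f i, e j⁆ = 0 ∧ ⁅f i, f j⁆ = 0)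
    (hzc : ∀ s, IsCentral (z s)) (hwc : ∀ s, IsCentral (w s)) :
    ∀ T : V →ₗ[ℝ] V, IsKY B T → T ≠ 0 → Function.Bijective T := by
  have : Nontrivial (Fin n) := Fin.nontrivial_iff_two_le.mpr hn
  exact statement_15_general hconn ⟨B, hsymm, hpos, e, f, z, w, hee, hff, hzz, hww, hef,
    hez, hew, hfz, hfw, hzw, hspan, hbee, hbff, hbef, hbfe, hnadj, hzc, hwc⟩
end

section
/- Let G be a connected simple graph on the vertex set {1,…,n} (n ≥ 2) with non-empty edge set E, and let (𝔫_G, ⟨·,·⟩) be the associated real metric Lie algebra. If I is an endomorphism of 𝔫_G with I² = −Id, ⟨Ix,y⟩ = −⟨x,Iy⟩ for all x,y, and I⁅x,y⁆ = ⁅Ix,y⁆ for all x,y ∈ 𝔫_G (a bi-invariant complex structure Hermitian with respect to ⟨·,·⟩), then I = J or I = −J, where J is the endomorphism determined by Je_i = f_i, Jf_i = −e_i, Jz_s = w_s, Jw_s = −z_s. -/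
/-!
For an edge `s = {i, j}` the vectors `I z_s`, `I w_s` lie in `⁅e_i, 𝔫⁆ ∩ ⁅e_j, 𝔫⁆ = ⟨z_s, w_s⟩`,
because `I` commutes with every `ad x`. Skew-symmetry then leaves `I z_s = c_s w_s` and
`I w_s = -c_s z_s`. Since `ad e_j` maps the span of the `e_k`, `f_k` with `k ∼ j` isometrically into
the center, `c_s` is the `f_i`-coordinate of `I e_i` for each endpoint `i` of `s`, and connectedness
makes it a constant `c`. A vector is determined by its brackets with the `e_j` and its central
coordinates, whence `I = c J`, and `I² = -1` forces `c = ±1`.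
-/

section LinearAlgebra

variable {R V : Type*} [CommRing R]

theorem eq_of_forall_apply_eq_of_orthonormal_span_eq_top [AddCommGroup V] [Module R V]
    {B : V →ₗ[R] V →ₗ[R] R} {κ : Type*} [DecidableEq κ] {b : κ → V}
    (hb : ∀ p q, B (b p) (b q) = if p = q then 1 else 0)
    (hspan : Submodule.span R (Set.range b) = ⊤) {u v : V} (huv : ∀ p, B u (b p) = B v (b p)) :
    u = v := by
  have hmem : u - v ∈ Submodule.span R (Set.range b) := hspan ▸ Submodule.mem_top
  obtain ⟨c, hc⟩ := (Finsupp.mem_span_range_iff_exists_finsupp).mp hmem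
  have hcoord (q : κ) : c q = 0 := by
    have hq : B (c.sum fun p a ↦ a • b p) (b q) = c q := by
      simp [Finsupp.sum, hb, Finset.sum_ite_eq']
    rw [← hq, hc, map_sub, LinearMap.sub_apply, huv, sub_self]
  rw [← sub_eq_zero, ← hc, Finsupp.ext hcoord (g := 0), Finsupp.sum_zero_index]

theorem apply_map_self_eq_zero_of_skew [AddCommGroup V] [Module R V] [NoZeroDivisors R]
    [NeZero (2 : R)] {B : V →ₗ[R] V →ₗ[R] R} (hsymm : ∀ x y, B x y = B y x) {I : V →ₗ[R] V}
    (hskew : ∀ x y, B (I x) y = -B x (I y)) (x : V) : B (I x) x = 0 := by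
  have hneg : B (I x) x = -B (I x) x := (hskew x x).trans (by rw [hsymm x])
  have htwo : 2 * B (I x) x = 0 := by linear_combination hneg
  exact (mul_eq_zero.mp htwo).resolve_left two_ne_zero

theorem map_lie_right_of_map_lie_left [LieRing V] [LieAlgebra R V] {I : V →ₗ[R] V}
    (hI : ∀ x y : V, I ⁅x, y⁆ = ⁅I x, y⁆) (x y : V) : I ⁅x, y⁆ = ⁅x, I y⁆ := by
  rw [← lie_skew, map_neg, hI, lie_skew]

end LinearAlgebra

theorem IsCentral.lie_eq_zero {V : Type*} [LieRing V] {z : V} (hz : IsCentral z) (x : V) :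
    ⁅x, z⁆ = 0 := by
  rw [← lie_skew, hz, neg_zero]

section Graph

variable {ι : Type*} {G : SimpleGraph ι}

theorem eq_of_preconnected_of_forall_adj {α : Type*} {c : ι → α} (hG : G.Preconnected)
    (hc : ∀ i j, G.Adj i j → c i = c j) (i j : ι) : c i = c j := by
  obtain ⟨p⟩ := hG i j
  induction p with
  | nil => rfl
  | cons hadj _ ih => exact (hc _ _ hadj).trans ih

theorem exists_mem_notMem_of_edge_ne {s t : G.edgeSet} (hst : s ≠ t) :
    ∃ i ∈ s.1, i ∉ t.1 := by
  obtain ⟨⟨i, j⟩, hs⟩ := s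
  by_contra! hsub
  exact hst <| Subtype.ext <| Sym2.eq_of_ne_mem (G.mem_edgeSet.mp hs).ne
    (Sym2.mem_mk_left i j) (Sym2.mem_mk_right i j)
    (hsub i (Sym2.mem_mk_left i j)) (hsub j (Sym2.mem_mk_right i j))

end Graph

/-- `e, f, z, w` is an orthonormal frame, with respect to the symmetric form `B`, of a Lie algebra
in which the `z s`, `w s` are central and the brackets with the `e j` are those of `𝔫_G`. Edges are
oriented by the order of `ι`; the brackets `⁅f i, f j⁆` are left free. -/
structure IsGraphLieFrame {R ι V : Type*} [CommRing R] [LinearOrder ι] [LieRing V]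
    [LieAlgebra R V] (G : SimpleGraph ι) (B : V →ₗ[R] V →ₗ[R] R) (e f : ι → V)
    (z w : G.edgeSet → V) : Prop where
  symm : ∀ x y, B x y = B y x
  e_e : ∀ i j, B (e i) (e j) = if i = j then 1 else 0
  f_f : ∀ i j, B (f i) (f j) = if i = j then 1 else 0
  z_z : ∀ s t, B (z s) (z t) = if s = t then 1 else 0
  w_w : ∀ s t, B (w s) (w t) = if s = t then 1 else 0
  e_f : ∀ i j, B (e i) (f j) = 0
  e_z : ∀ i s, B (e i) (z s) = 0
  e_w : ∀ i s, B (e i) (w s) = 0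
  f_z : ∀ i s, B (f i) (z s) = 0
  f_w : ∀ i s, B (f i) (w s) = 0
  z_w : ∀ s t, B (z s) (w t) = 0
  span_eq_top :
    Submodule.span R (Set.range e ∪ Set.range f ∪ Set.range z ∪ Set.range w) = ⊤
  lie_e_e : ∀ i j, ∀ h : G.Adj i j, i < j → ⁅e i, e j⁆ = z ⟨s(i, j), G.mem_edgeSet.mpr h⟩
  lie_e_f : ∀ i j, ∀ h : G.Adj i j, i < j → ⁅e i, f j⁆ = w ⟨s(i, j), G.mem_edgeSet.mpr h⟩
  lie_f_e : ∀ i j, ∀ h : G.Adj i j, i < j → ⁅f i, e j⁆ = w ⟨s(i, j), G.mem_edgeSet.mpr h⟩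
  lie_e_e_of_not_adj : ∀ i j, ¬G.Adj i j → ⁅e i, e j⁆ = 0
  lie_e_f_of_not_adj : ∀ i j, ¬G.Adj i j → ⁅e i, f j⁆ = 0
  isCentral_z : ∀ s, IsCentral (z s)
  isCentral_w : ∀ s, IsCentral (w s)

namespace IsGraphLieFrame

variable {R ι V : Type*} [CommRing R] [LinearOrder ι] [LieRing V] [LieAlgebra R V]
  {G : SimpleGraph ι} {B : V →ₗ[R] V →ₗ[R] R} {e f : ι → V} {z w : G.edgeSet → V}

theorem f_e (h : IsGraphLieFrame G B e f z w) (i j : ι) : B (f i) (e j) = 0 := by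
  rw [h.symm, h.e_f]

theorem z_e (h : IsGraphLieFrame G B e f z w) (s : G.edgeSet) (i : ι) : B (z s) (e i) = 0 := by
  rw [h.symm, h.e_z]

theorem z_f (h : IsGraphLieFrame G B e f z w) (s : G.edgeSet) (i : ι) : B (z s) (f i) = 0 := by
  rw [h.symm, h.f_z]

theorem w_e (h : IsGraphLieFrame G B e f z w) (s : G.edgeSet) (i : ι) : B (w s) (e i) = 0 := by
  rw [h.symm, h.e_w]

theorem w_f (h : IsGraphLieFrame G B e f z w) (s : G.edgeSet) (i : ι) : B (w s) (f i) = 0 := by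
  rw [h.symm, h.f_w]

theorem w_z (h : IsGraphLieFrame G B e f z w) (s t : G.edgeSet) : B (w s) (z t) = 0 := by
  rw [h.symm, h.z_w]

theorem ext (h : IsGraphLieFrame G B e f z w) {u v : V} (he : ∀ i, B u (e i) = B v (e i))
    (hf : ∀ i, B u (f i) = B v (f i)) (hz : ∀ s, B u (z s) = B v (z s))
    (hw : ∀ s, B u (w s) = B v (w s)) : u = v := by
  refine eq_of_forall_apply_eq_of_orthonormal_span_eq_top (B := B)
    (b := Sum.elim (Sum.elim (Sum.elim e f) z) w) ?_ ?_ ?_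
  · rintro (((i | i) | s) | s) (((j | j) | t) | t) <;>
      simp [h.e_e, h.f_f, h.z_z, h.w_w, h.e_f, h.e_z, h.e_w, h.f_e, h.f_z, h.f_w, h.z_e, h.z_f,
        h.z_w, h.w_e, h.w_f, h.w_z]
  · simpa only [Set.Sum.elim_range] using h.span_eq_top
  · rintro (((i | i) | s) | s)
    exacts [he i, hf i, hz s, hw s]

theorem hom_ext (h : IsGraphLieFrame G B e f z w) {φ ψ : V →ₗ[R] R} (he : ∀ i, φ (e i) = ψ (e i))
    (hf : ∀ i, φ (f i) = ψ (f i)) (hz : ∀ s, φ (z s) = ψ (z s)) (hw : ∀ s, φ (w s) = ψ (w s)) :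
    φ = ψ := by
  refine LinearMap.ext_on h.span_eq_top ?_
  rintro _ (((⟨i, rfl⟩ | ⟨i, rfl⟩) | ⟨s, rfl⟩) | ⟨s, rfl⟩)
  exacts [he i, hf i, hz s, hw s]

theorem exists_sign_lie_eq_smul (h : IsGraphLieFrame G B e f z w) {i j : ι} {s : G.edgeSet}
    (hs : s.1 = s(i, j)) :
    ∃ ε : R, ε * ε = 1 ∧ ⁅e i, e j⁆ = ε • z s ∧ ⁅e i, f j⁆ = ε • w s := by
  have hadj : G.Adj i j := G.mem_edgeSet.mp (hs ▸ s.2)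
  rcases lt_or_gt_of_ne hadj.ne with hlt | hlt
  · obtain rfl : s = ⟨s(i, j), G.mem_edgeSet.mpr hadj⟩ := Subtype.ext hs
    exact ⟨1, by simp, by simp [h.lie_e_e i j hadj hlt], by simp [h.lie_e_f i j hadj hlt]⟩
  · obtain rfl : s = ⟨s(j, i), G.mem_edgeSet.mpr hadj.symm⟩ :=
      Subtype.ext (hs.trans Sym2.eq_swap)
    refine ⟨-1, by simp, ?_, ?_⟩
    · rw [← lie_skew, h.lie_e_e j i hadj.symm hlt, neg_one_smul]
    · rw [← lie_skew, h.lie_f_e j i hadj.symm hlt, neg_one_smul]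

theorem exists_lie_e_eq_z (h : IsGraphLieFrame G B e f z w) {i : ι} {s : G.edgeSet}
    (hi : i ∈ s.1) : ∃ x, ⁅e i, x⁆ = z s := by
  obtain ⟨j, hs⟩ := hi
  obtain ⟨ε, hε, hz, -⟩ := h.exists_sign_lie_eq_smul hs
  exact ⟨ε • e j, by rw [lie_smul, hz, smul_smul, hε, one_smul]⟩

theorem exists_lie_e_eq_w (h : IsGraphLieFrame G B e f z w) {i : ι} {s : G.edgeSet}
    (hi : i ∈ s.1) : ∃ x, ⁅e i, x⁆ = w s := by
  obtain ⟨j, hs⟩ := hi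
  obtain ⟨ε, hε, -, hw⟩ := h.exists_sign_lie_eq_smul hs
  exact ⟨ε • f j, by rw [lie_smul, hw, smul_smul, hε, one_smul]⟩

theorem apply_lie_e_eq_apply (h : IsGraphLieFrame G B e f z w) {j : ι} {u v : V}
    (he : ∀ k, B ⁅e j, e k⁆ u = B (e k) v) (hf : ∀ k, B ⁅e j, f k⁆ u = B (f k) v)
    (hz : ∀ s, B (z s) v = 0) (hw : ∀ s, B (w s) v = 0) (x : V) : B ⁅e j, x⁆ u = B x v := by
  have hext : B.flip u ∘ₗ LieAlgebra.ad R V (e j) = B.flip v := by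
    refine h.hom_ext he hf (fun s ↦ ?_) fun s ↦ ?_
    · simp [(h.isCentral_z s).lie_eq_zero, hz]
    · simp [(h.isCentral_w s).lie_eq_zero, hw]
  exact LinearMap.congr_fun hext x

theorem apply_lie_e_eq_zero (h : IsGraphLieFrame G B e f z w) {j : ι} {u : V}
    (hz : ∀ s : G.edgeSet, j ∈ s.1 → B (z s) u = 0)
    (hw : ∀ s : G.edgeSet, j ∈ s.1 → B (w s) u = 0) (x : V) : B ⁅e j, x⁆ u = 0 := by
  rw [h.apply_lie_e_eq_apply (v := 0) (fun k ↦ ?_) (fun k ↦ ?_) (by simp) (by simp), map_zero]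
  all_goals by_cases hk : G.Adj j k
  · obtain ⟨ε, -, hε, -⟩ := h.exists_sign_lie_eq_smul (s := ⟨s(j, k), hk⟩) rfl
    simp [hε, hz ⟨s(j, k), hk⟩ (Sym2.mem_mk_left j k)]
  · simp [h.lie_e_e_of_not_adj j k hk]
  · obtain ⟨ε, -, -, hε⟩ := h.exists_sign_lie_eq_smul (s := ⟨s(j, k), hk⟩) rfl
    simp [hε, hw ⟨s(j, k), hk⟩ (Sym2.mem_mk_left j k)]
  · simp [h.lie_e_f_of_not_adj j k hk]

theorem apply_lie_e_z_of_notMem (h : IsGraphLieFrame G B e f z w) {i : ι} {t : G.edgeSet}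
    (hit : i ∉ t.1) (x : V) : B ⁅e i, x⁆ (z t) = 0 :=
  h.apply_lie_e_eq_zero
    (fun s his ↦ by rw [h.z_z, if_neg (by rintro rfl; exact hit his)]) (fun s _ ↦ h.w_z s t) x

theorem apply_lie_e_w_of_notMem (h : IsGraphLieFrame G B e f z w) {i : ι} {t : G.edgeSet}
    (hit : i ∉ t.1) (x : V) : B ⁅e i, x⁆ (w t) = 0 :=
  h.apply_lie_e_eq_zero (fun s _ ↦ h.z_w s t)
    (fun s his ↦ by rw [h.w_w, if_neg (by rintro rfl; exact hit his)]) x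

theorem apply_lie_e_lie_e_e (h : IsGraphLieFrame G B e f z w) {i j : ι} (hadj : G.Adj j i)
    (x : V) : B ⁅e j, x⁆ ⁅e j, e i⁆ = B x (e i) := by
  obtain ⟨ε, hε, hji, -⟩ := h.exists_sign_lie_eq_smul (s := ⟨s(j, i), hadj⟩) rfl
  refine h.apply_lie_e_eq_apply (fun k ↦ ?_) (fun k ↦ ?_) (fun s ↦ h.z_e s i)
    (fun s ↦ h.w_e s i) x
  all_goals by_cases hk : G.Adj j k
  · obtain ⟨δ, -, hjk, -⟩ := h.exists_sign_lie_eq_smul (s := ⟨s(j, k), hk⟩) rfl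
    by_cases hki : k = i
    · subst hki
      simp [hji, h.z_z, h.e_e, hε]
    · simp [hji, hjk, h.z_z, h.e_e, Subtype.ext_iff, hki, hadj.ne]
  · simp [h.lie_e_e_of_not_adj j k hk, h.e_e, show k ≠ i from fun hki ↦ hk (hki ▸ hadj)]
  · obtain ⟨δ, -, -, hjk⟩ := h.exists_sign_lie_eq_smul (s := ⟨s(j, k), hk⟩) rfl
    simp [hji, hjk, h.w_z, h.f_e]
  · simp [h.lie_e_f_of_not_adj j k hk, h.f_e]

theorem apply_lie_e_lie_e_f (h : IsGraphLieFrame G B e f z w) {i j : ι} (hadj : G.Adj j i)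
    (x : V) : B ⁅e j, x⁆ ⁅e j, f i⁆ = B x (f i) := by
  obtain ⟨ε, hε, -, hji⟩ := h.exists_sign_lie_eq_smul (s := ⟨s(j, i), hadj⟩) rfl
  refine h.apply_lie_e_eq_apply (fun k ↦ ?_) (fun k ↦ ?_) (fun s ↦ h.z_f s i)
    (fun s ↦ h.w_f s i) x
  all_goals by_cases hk : G.Adj j k
  · obtain ⟨δ, -, hjk, -⟩ := h.exists_sign_lie_eq_smul (s := ⟨s(j, k), hk⟩) rfl
    simp [hji, hjk, h.z_w, h.e_f]
  · simp [h.lie_e_e_of_not_adj j k hk, h.e_f]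
  · obtain ⟨δ, -, -, hjk⟩ := h.exists_sign_lie_eq_smul (s := ⟨s(j, k), hk⟩) rfl
    by_cases hki : k = i
    · subst hki
      simp [hji, h.w_w, h.f_f, hε]
    · simp [hji, hjk, h.w_w, h.f_f, Subtype.ext_iff, hki, hadj.ne]
  · simp [h.lie_e_f_of_not_adj j k hk, h.f_f, show k ≠ i from fun hki ↦ hk (hki ▸ hadj)]

theorem eq_of_forall_lie_e_eq (h : IsGraphLieFrame G B e f z w) (hG : ∀ i, ∃ j, G.Adj i j)
    {x y : V} (hlie : ∀ j, ⁅e j, x⁆ = ⁅e j, y⁆) (hz : ∀ s, B x (z s) = B y (z s))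
    (hw : ∀ s, B x (w s) = B y (w s)) : x = y := by
  refine h.ext (fun i ↦ ?_) (fun i ↦ ?_) hz hw <;> obtain ⟨j, hij⟩ := hG i
  · rw [← h.apply_lie_e_lie_e_e hij.symm, hlie, h.apply_lie_e_lie_e_e hij.symm]
  · rw [← h.apply_lie_e_lie_e_f hij.symm, hlie, h.apply_lie_e_lie_e_f hij.symm]

theorem eq_smul_z_add_smul_w_of_forall_mem_exists_lie_e_eq (h : IsGraphLieFrame G B e f z w)
    {s : G.edgeSet} {u : V} (hu : ∀ i ∈ s.1, ∃ x, ⁅e i, x⁆ = u) :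
    u = B u (z s) • z s + B u (w s) • w s := by
  obtain ⟨x, hx⟩ := hu _ s.1.out_fst_mem
  refine h.ext (fun k ↦ ?_) (fun k ↦ ?_) (fun t ↦ ?_) (fun t ↦ ?_)
  · rw [← hx, h.apply_lie_e_eq_zero (fun t _ ↦ h.z_e t k) (fun t _ ↦ h.w_e t k)]
    simp [h.z_e, h.w_e]
  · rw [← hx, h.apply_lie_e_eq_zero (fun t _ ↦ h.z_f t k) (fun t _ ↦ h.w_f t k)]
    simp [h.z_f, h.w_f]
  · rcases eq_or_ne s t with rfl | hst
    · simp [h.z_z, h.w_z]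
    · obtain ⟨i, his, hit⟩ := exists_mem_notMem_of_edge_ne hst
      obtain ⟨y, rfl⟩ := hu i his
      simp [h.apply_lie_e_z_of_notMem hit, h.z_z, h.w_z, hst]
  · rcases eq_or_ne s t with rfl | hst
    · simp [h.z_w, h.w_w]
    · obtain ⟨i, his, hit⟩ := exists_mem_notMem_of_edge_ne hst
      obtain ⟨y, rfl⟩ := hu i his
      simp [h.apply_lie_e_w_of_notMem hit, h.z_w, h.w_w, hst]

section Endomorphism

variable {I : V →ₗ[R] V}

theorem map_z_eq_smul_w [NoZeroDivisors R] [NeZero (2 : R)] (h : IsGraphLieFrame G B e f z w)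
    (hskew : ∀ x y, B (I x) y = -B x (I y)) (hlie : ∀ x y : V, I ⁅x, y⁆ = ⁅x, I y⁆)
    (s : G.edgeSet) : I (z s) = B (I (z s)) (w s) • w s := by
  have hrange : ∀ i ∈ s.1, ∃ x, ⁅e i, x⁆ = I (z s) := fun i hi ↦ by
    obtain ⟨x, hx⟩ := h.exists_lie_e_eq_z hi
    exact ⟨I x, by rw [← hlie, hx]⟩
  simpa [apply_map_self_eq_zero_of_skew h.symm hskew] using
    h.eq_smul_z_add_smul_w_of_forall_mem_exists_lie_e_eq hrange

theorem map_w_eq_neg_smul_z [NoZeroDivisors R] [NeZero (2 : R)]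
    (h : IsGraphLieFrame G B e f z w) (hskew : ∀ x y, B (I x) y = -B x (I y))
    (hlie : ∀ x y : V, I ⁅x, y⁆ = ⁅x, I y⁆) (s : G.edgeSet) :
    I (w s) = -(B (I (z s)) (w s) • z s) := by
  have hrange : ∀ i ∈ s.1, ∃ x, ⁅e i, x⁆ = I (w s) := fun i hi ↦ by
    obtain ⟨x, hx⟩ := h.exists_lie_e_eq_w hi
    exact ⟨I x, by rw [← hlie, hx]⟩
  have hcoeff : B (I (w s)) (z s) = -B (I (z s)) (w s) := by rw [hskew, h.symm]
  simpa [apply_map_self_eq_zero_of_skew h.symm hskew, hcoeff] using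
    h.eq_smul_z_add_smul_w_of_forall_mem_exists_lie_e_eq hrange

theorem apply_map_z_w_eq_apply_map_e_f (h : IsGraphLieFrame G B e f z w)
    (hlie : ∀ x y : V, I ⁅x, y⁆ = ⁅x, I y⁆) {i : ι} {s : G.edgeSet} (hi : i ∈ s.1) :
    B (I (z s)) (w s) = B (I (e i)) (f i) := by
  obtain ⟨j, hs⟩ := hi
  replace hs : s.1 = s(j, i) := hs.trans Sym2.eq_swap
  obtain ⟨ε, hε, hz, hw⟩ := h.exists_sign_lie_eq_smul hs
  calc B (I (z s)) (w s) = B (I (ε • z s)) (ε • w s) := by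
        simp [← mul_assoc, hε]
    _ = B ⁅e j, I (e i)⁆ ⁅e j, f i⁆ := by rw [← hz, ← hw, hlie]
    _ = B (I (e i)) (f i) := h.apply_lie_e_lie_e_f (G.mem_edgeSet.mp (hs ▸ s.2)) _

theorem exists_map_z_eq_smul_and_map_w_eq_neg_smul [NoZeroDivisors R] [NeZero (2 : R)]
    (h : IsGraphLieFrame G B e f z w) (hconn : G.Connected)
    (hskew : ∀ x y, B (I x) y = -B x (I y)) (hlie : ∀ x y : V, I ⁅x, y⁆ = ⁅x, I y⁆) :
    ∃ c : R, (∀ s, I (z s) = c • w s) ∧ ∀ s, I (w s) = -(c • z s) := by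
  obtain ⟨i₀⟩ := hconn.nonempty
  have hadj (i j : ι) (hij : G.Adj i j) : B (I (e i)) (f i) = B (I (e j)) (f j) := by
    let s : G.edgeSet := ⟨s(i, j), G.mem_edgeSet.mpr hij⟩
    rw [← h.apply_map_z_w_eq_apply_map_e_f hlie (s := s) (Sym2.mem_mk_left i j),
      ← h.apply_map_z_w_eq_apply_map_e_f hlie (s := s) (Sym2.mem_mk_right i j)]
  have hconst (s : G.edgeSet) : B (I (z s)) (w s) = B (I (e i₀)) (f i₀) :=
    (h.apply_map_z_w_eq_apply_map_e_f hlie s.1.out_fst_mem).trans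
      (eq_of_preconnected_of_forall_adj hconn.preconnected hadj _ i₀)
  exact ⟨B (I (e i₀)) (f i₀), fun s ↦ hconst s ▸ h.map_z_eq_smul_w hskew hlie s,
    fun s ↦ hconst s ▸ h.map_w_eq_neg_smul_z hskew hlie s⟩

variable {c : R}

theorem map_lie_e_e (h : IsGraphLieFrame G B e f z w) (hz : ∀ s, I (z s) = c • w s) (j i : ι) :
    I ⁅e j, e i⁆ = c • ⁅e j, f i⁆ := by
  by_cases hji : G.Adj j i
  · obtain ⟨ε, -, hee, hef⟩ := h.exists_sign_lie_eq_smul (s := ⟨s(j, i), hji⟩) rfl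
    rw [hee, hef, map_smul, hz, smul_comm]
  · rw [h.lie_e_e_of_not_adj j i hji, h.lie_e_f_of_not_adj j i hji, map_zero, smul_zero]

theorem map_lie_e_f (h : IsGraphLieFrame G B e f z w) (hw : ∀ s, I (w s) = -(c • z s))
    (j i : ι) : I ⁅e j, f i⁆ = -(c • ⁅e j, e i⁆) := by
  by_cases hji : G.Adj j i
  · obtain ⟨ε, -, hee, hef⟩ := h.exists_sign_lie_eq_smul (s := ⟨s(j, i), hji⟩) rfl
    rw [hee, hef, map_smul, hw, smul_neg, smul_comm]
  · rw [h.lie_e_e_of_not_adj j i hji, h.lie_e_f_of_not_adj j i hji, map_zero, smul_zero, neg_zero]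

theorem map_e_eq_smul_f (h : IsGraphLieFrame G B e f z w) (hG : ∀ i, ∃ j, G.Adj i j)
    (hskew : ∀ x y, B (I x) y = -B x (I y)) (hlie : ∀ x y : V, I ⁅x, y⁆ = ⁅x, I y⁆)
    (hz : ∀ s, I (z s) = c • w s) (hw : ∀ s, I (w s) = -(c • z s)) (i : ι) :
    I (e i) = c • f i := by
  refine h.eq_of_forall_lie_e_eq hG (fun j ↦ ?_) (fun s ↦ ?_) (fun s ↦ ?_)
  · rw [← hlie, h.map_lie_e_e hz, lie_smul]
  · simp [hskew, hz, h.e_w, h.f_z]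
  · simp [hskew, hw, h.e_z, h.f_w]

theorem map_f_eq_neg_smul_e (h : IsGraphLieFrame G B e f z w) (hG : ∀ i, ∃ j, G.Adj i j)
    (hskew : ∀ x y, B (I x) y = -B x (I y)) (hlie : ∀ x y : V, I ⁅x, y⁆ = ⁅x, I y⁆)
    (hz : ∀ s, I (z s) = c • w s) (hw : ∀ s, I (w s) = -(c • z s)) (i : ι) :
    I (f i) = -(c • e i) := by
  refine h.eq_of_forall_lie_e_eq hG (fun j ↦ ?_) (fun s ↦ ?_) (fun s ↦ ?_)
  · rw [← hlie, h.map_lie_e_f hw, lie_neg, lie_smul]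
  · simp [hskew, hz, h.e_z, h.f_w]
  · simp [hskew, hw, h.e_w, h.f_z]

theorem mul_self_eq_one_of_map_map_eq_neg (h : IsGraphLieFrame G B e f z w)
    (hsq : ∀ x, I (I x) = -x) {i : ι} (he : I (e i) = c • f i) (hf : I (f i) = -(c • e i)) :
    c * c = 1 := by
  have hneg : c • (-(c • e i)) = -e i := by rw [← hf, ← map_smul, ← he, hsq]
  simpa [h.e_e] using congrArg (B · (e i)) hneg

end Endomorphism

end IsGraphLieFrame

theorem statement_16_general {R ι V : Type*} [CommRing R] [NoZeroDivisors R] [NeZero (2 : R)]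
    [LinearOrder ι] [Nontrivial ι] [LieRing V] [LieAlgebra R V] {G : SimpleGraph ι}
    (hconn : G.Connected) {B : V →ₗ[R] V →ₗ[R] R} {e f : ι → V} {z w : G.edgeSet → V}
    (h : IsGraphLieFrame G B e f z w) {I : V →ₗ[R] V} (hsq : ∀ x, I (I x) = -x)
    (hskew : ∀ x y, B (I x) y = -B x (I y)) (hbi : ∀ x y : V, I ⁅x, y⁆ = ⁅I x, y⁆) :
    ((∀ i, I (e i) = f i) ∧ (∀ i, I (f i) = -e i) ∧
      (∀ s, I (z s) = w s) ∧ (∀ s, I (w s) = -z s)) ∨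
    ((∀ i, I (e i) = -f i) ∧ (∀ i, I (f i) = e i) ∧
      (∀ s, I (z s) = -w s) ∧ (∀ s, I (w s) = z s)) := by
  have hlie := map_lie_right_of_map_lie_left hbi
  obtain ⟨c, hz, hw⟩ := h.exists_map_z_eq_smul_and_map_w_eq_neg_smul hconn hskew hlie
  have hG : ∀ i, ∃ j, G.Adj i j := hconn.preconnected.exists_adj_of_nontrivial
  have he := h.map_e_eq_smul_f hG hskew hlie hz hw
  have hf := h.map_f_eq_neg_smul_e hG hskew hlie hz hw
  obtain ⟨i₀⟩ := hconn.nonempty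
  rcases mul_self_eq_one_iff.mp (h.mul_self_eq_one_of_map_map_eq_neg hsq (he i₀) (hf i₀)) with
    rfl | rfl
  · exact .inl (by simp [he, hf, hz, hw])
  · exact .inr (by simp [he, hf, hz, hw])

/-- for a connected graph G, any bi-invariant orthogonal complex
structure I on the metric Lie algebra 𝔫_G equals J or -J, where Je_i = f_i,
Jf_i = -e_i, Jz_s = w_s, Jw_s = -z_s. -/
theorem statement_16
    (n : ℕ) (hn : 2 ≤ n) (G : SimpleGraph (Fin n))
    (hconn : G.Connected) (hE : G.edgeSet.Nonempty)
    (V : Type*) [LieRing V] [LieAlgebra ℝ V]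
    (B : V →ₗ[ℝ] V →ₗ[ℝ] ℝ)
    (hsymm : ∀ x y : V, B x y = B y x) (hpos : ∀ x : V, x ≠ 0 → 0 < B x x)
    (e f : Fin n → V) (z w : G.edgeSet → V)
    -- the basis {e i, f i, z s, w s} is orthonormal
    (hee : ∀ i j, B (e i) (e j) = if i = j then 1 else 0)
    (hff : ∀ i j, B (f i) (f j) = if i = j then 1 else 0)
    (hzz : ∀ s t, B (z s) (z t) = if s = t then 1 else 0)
    (hww : ∀ s t, B (w s) (w t) = if s = t then 1 else 0)
    (hef : ∀ i j, B (e i) (f j) = 0)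
    (hez : ∀ i s, B (e i) (z s) = 0)
    (hew : ∀ i s, B (e i) (w s) = 0)
    (hfz : ∀ i s, B (f i) (z s) = 0)
    (hfw : ∀ i s, B (f i) (w s) = 0)
    (hzw : ∀ s t, B (z s) (w t) = 0)
    -- ... and spans V
    (hspan : Submodule.span ℝ
      (Set.range e ∪ Set.range f ∪ Set.range z ∪ Set.range w) = ⊤)
    -- the bracket relations of the Lie algebra 𝔫_G
    (hbee : ∀ i j, ∀ h : G.Adj i j, i < j →
        ⁅e i, e j⁆ = z ⟨s(i, j), G.mem_edgeSet.mpr h⟩)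
    (hbff : ∀ i j, ∀ h : G.Adj i j, i < j →
        ⁅f i, f j⁆ = -z ⟨s(i, j), G.mem_edgeSet.mpr h⟩)
    (hbef : ∀ i j, ∀ h : G.Adj i j, i < j →
        ⁅e i, f j⁆ = w ⟨s(i, j), G.mem_edgeSet.mpr h⟩)
    (hbfe : ∀ i j, ∀ h : G.Adj i j, i < j →
        ⁅f i, e j⁆ = w ⟨s(i, j), G.mem_edgeSet.mpr h⟩)
    (hnadj : ∀ i j, ¬ G.Adj i j →
        ⁅e i, e j⁆ = 0 ∧ ⁅e i, f j⁆ = 0 ∧ ⁅f i, e j⁆ = 0 ∧ ⁅f i, f j⁆ = 0)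
    (hzc : ∀ s, IsCentral (z s)) (hwc : ∀ s, IsCentral (w s))
    (I : V →ₗ[ℝ] V) (hI2 : ∀ x : V, I (I x) = -x)
    (hIskew : ∀ x y : V, B (I x) y = - B x (I y))
    (hIbi : ∀ x y : V, I ⁅x, y⁆ = ⁅I x, y⁆) :
    ((∀ i, I (e i) = f i) ∧ (∀ i, I (f i) = -e i) ∧
      (∀ s, I (z s) = w s) ∧ (∀ s, I (w s) = -z s)) ∨
    ((∀ i, I (e i) = -f i) ∧ (∀ i, I (f i) = e i) ∧
      (∀ s, I (z s) = -w s) ∧ (∀ s, I (w s) = z s)) := by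
  have : Nontrivial (Fin n) := Fin.nontrivial_iff_two_le.mpr hn
  exact statement_16_general hconn ⟨hsymm, hee, hff, hzz, hww, hef, hez, hew, hfz, hfw, hzw, hspan,
    hbee, hbef, hbfe, fun i j hij ↦ (hnadj i j hij).1, fun i j hij ↦ (hnadj i j hij).2.1, hzc, hwc⟩
    hI2 hIskew hIbi
end

section
/- Fix n ≥ 2 and let 𝔥 be the real Lie algebra of dimension 4n+2 (the real Lie algebra underlying the complex Heisenberg Lie algebra 𝔥_{2n+1}(ℂ)) with basis {x_i, u_i, y_i, v_i : 1 ≤ i ≤ n} ∪ {z, w} and Lie bracket determined by ⁅x_i, y_i⁆ = z, ⁅x_i, v_i⁆ = ⁅u_i, y_i⁆ = w, ⁅u_i, v_i⁆ = −z for each i, all other brackets of basis vectors being zero. Equip 𝔥 with the inner product making this basis orthonormal (the canonical H-type Hermitian metric). Then the space of Killing–Yano tensors on (𝔥, ⟨·,·⟩) is one-dimensional: every Killing–Yano tensor is a·T₀ for a unique a ∈ ℝ, where T₀x_i = u_i, T₀u_i = −x_i, T₀y_i = v_i, T₀v_i = −y_i, T₀z = 3w, T₀w = −3z. -/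
/-!
Let `J` be a skew endomorphism with `J⁅x, y⁆ = ⁅J x, y⁆`. If brackets are central, then `T₀ = J` on
`𝔳`, `T₀ = 3 J` on `𝔷` defines a Killing–Yano tensor.
Conversely let `T` be Killing–Yano. If `T = 3 a J` on `𝔷`, then for `x, y ∈ 𝔳` we get
`3 ⁅T x, y⁆ = T⁅x, y⁆ = 3 a J⁅x, y⁆ = 3 ⁅a J x, y⁆`, so `T x - a J x` is central; it also lies in
`𝔳`, so it vanishes and `T = a T₀`. On the complex Heisenberg algebra `𝔷` is the plane `span {z, w}`
with `J z = w`, and a skew endomorphism of a plane is automatically a multiple of the rotation `J`.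
-/

section ComplexStructure

open Module

variable {R M κ : Type*} [CommRing R] [AddCommGroup M] [Module R M]

/-- The complex structure attached to a basis indexed by `κ ⊕ κ`, where `inl k` labels a basis
vector of the complex vector space and `inr k` labels its product with `√-1`. -/
noncomputable def complexStructure (b : Basis (κ ⊕ κ) R M) : M →ₗ[R] M :=
  b.constr R (Sum.elim (b ∘ Sum.inr) (-(b ∘ Sum.inl)))

theorem complexStructure_inl (b : Basis (κ ⊕ κ) R M) (k : κ) :
    complexStructure b (b (Sum.inl k)) = b (Sum.inr k) := by
  simp [complexStructure]

theorem complexStructure_inr (b : Basis (κ ⊕ κ) R M) (k : κ) :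
    complexStructure b (b (Sum.inr k)) = -b (Sum.inl k) := by
  simp [complexStructure]

theorem complexStructure_skew [DecidableEq κ] {B : M →ₗ[R] M →ₗ[R] R} {b : Basis (κ ⊕ κ) R M}
    (hb : ∀ p q, B (b p) (b q) = if p = q then 1 else 0) (m m' : M) :
    B (complexStructure b m) m' = -B m (complexStructure b m') := by
  suffices B ∘ₗ complexStructure b = -B.compl₂ (complexStructure b) from
    LinearMap.congr_fun₂ this m m'
  refine LinearMap.ext_basis b b ?_
  rintro (k | k) (l | l) <;> simp [complexStructure_inl, complexStructure_inr, hb]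

end ComplexStructure

theorem IsCentral.lie_eq_zero_s17 {L : Type*} [LieRing L] {c : L} (hc : IsCentral c) (x : L) :
    ⁅x, c⁆ = 0 := by
  rw [← lie_skew, hc, neg_zero]

section KillingYano

variable {V : Type*} [LieRing V] [LieAlgebra ℝ V] {B : V →ₗ[ℝ] V →ₗ[ℝ] ℝ}
  {J P T : V →ₗ[ℝ] V}

theorem IsCentral.map_of_lie (hJ : ∀ x y, J ⁅x, y⁆ = ⁅J x, y⁆) {c : V} (hc : IsCentral c) :
    IsCentral (J c) := fun y => by
  rw [← hJ, hc, map_zero]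

theorem InVperp.map_of_skew (hT : ∀ x y, B (T x) y = -B x (T y))
    (hTc : ∀ c, IsCentral c → IsCentral (T c)) {x : V} (hx : InVperp B x) : InVperp B (T x) :=
  fun c hc => by rw [hT, hx _ (hTc c hc), neg_zero]

theorem InVperp.sub_smul {x y : V} (hx : InVperp B x) (hy : InVperp B y) (a : ℝ) :
    InVperp B (x - a • y) := fun c hc => by
  simp [hx c hc, hy c hc]

theorem IsKY.smul (hT : IsKY B T) (a : ℝ) : IsKY B (a • T) := by
  obtain ⟨hskew, hcent, hlie⟩ := hT
  refine ⟨fun x y => by simp [hskew], fun c hc y => by simp [hcent c hc y], fun x y hx hy => ?_⟩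
  rw [LinearMap.smul_apply, hlie x y hx hy, LinearMap.smul_apply, smul_lie, smul_comm]

/-- `P` is the `B`-orthogonal projection onto the center. -/
structure IsCentralProjection (B : V →ₗ[ℝ] V →ₗ[ℝ] ℝ) (P : V →ₗ[ℝ] V) : Prop where
  isCentral : ∀ x, IsCentral (P x)
  apply_of_isCentral : ∀ c, IsCentral c → P c = c
  selfAdjoint : ∀ x y, B (P x) y = B x (P y)

namespace IsCentralProjection

theorem inVperp_sub (hP : IsCentralProjection B P) (x : V) : InVperp B (x - P x) := fun c hc => by
  rw [map_sub, LinearMap.sub_apply, hP.selfAdjoint, hP.apply_of_isCentral c hc, sub_self]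

theorem eq_zero_of_isCentral_of_inVperp (hP : IsCentralProjection B P) (hB : B.SeparatingLeft)
    {c : V} (hc : IsCentral c) (hperp : InVperp B c) : c = 0 :=
  hB c fun y => by
    rw [← hP.apply_of_isCentral c hc, hP.selfAdjoint, hperp _ (hP.isCentral y)]

theorem isCentral_of_lie_inVperp (hP : IsCentralProjection B P) {d : V}
    (hd : ∀ y, InVperp B y → ⁅d, y⁆ = 0) : IsCentral d := fun y => by
  rw [← sub_add_cancel y (P y), lie_add, hd _ (hP.inVperp_sub y),
    (hP.isCentral y).lie_eq_zero_s17, add_zero]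

end IsCentralProjection

/-- The endomorphism equal to `J` on `𝔳` and to `3 J` on `𝔷`, where `P` is the orthogonal projection
onto `𝔷`. -/
def kyTensor (J P : V →ₗ[ℝ] V) : V →ₗ[ℝ] V := J + (2 : ℝ) • J ∘ₗ P

theorem kyTensor_apply (J P : V →ₗ[ℝ] V) (x : V) :
    kyTensor J P x = J x + (2 : ℝ) • J (P x) := rfl

theorem IsCentralProjection.kyTensor_apply_of_isCentral (hP : IsCentralProjection B P) {c : V}
    (hc : IsCentral c) : kyTensor J P c = (3 : ℝ) • J c := by
  rw [kyTensor_apply, hP.apply_of_isCentral c hc]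
  module

theorem IsCentralProjection.comp_skew (hP : IsCentralProjection B P)
    (hskew : ∀ x y, B (J x) y = -B x (J y)) (hJc : ∀ c, IsCentral c → IsCentral (J c)) (x y : V) :
    B (J (P x)) y = -B x (J (P y)) := by
  have hPJP : ∀ x, P (J (P x)) = J (P x) := fun x =>
    hP.apply_of_isCentral _ (hJc _ (hP.isCentral x))
  calc B (J (P x)) y = B (J (P x)) (P y) := by rw [← hPJP, hP.selfAdjoint, hPJP]
    _ = -B (P x) (J (P y)) := hskew _ _
    _ = -B x (J (P y)) := by rw [hP.selfAdjoint, hPJP]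

theorem isKY_kyTensor (hP : IsCentralProjection B P) (hlie : ∀ x y : V, IsCentral ⁅x, y⁆)
    (hskew : ∀ x y, B (J x) y = -B x (J y)) (hJ : ∀ x y, J ⁅x, y⁆ = ⁅J x, y⁆) :
    IsKY B (kyTensor J P) := by
  have hJc : ∀ c, IsCentral c → IsCentral (J c) := fun _ => IsCentral.map_of_lie hJ
  refine ⟨fun x y => ?_, fun c hc y => ?_, fun x y _ _ => ?_⟩
  · simp only [kyTensor_apply, map_add, map_smul, LinearMap.add_apply, LinearMap.smul_apply,
      hskew x y, hP.comp_skew hskew hJc x y, smul_eq_mul]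
    ring
  · rw [hP.kyTensor_apply_of_isCentral hc, smul_lie, hJc c hc, smul_zero]
  · rw [hP.kyTensor_apply_of_isCentral (hlie x y), kyTensor_apply, add_lie, smul_lie,
      hJc _ (hP.isCentral x), smul_zero, add_zero, hJ]

theorem IsKY.eq_smul_of_inVperp (hT : IsKY B T) (hB : B.SeparatingLeft)
    (hP : IsCentralProjection B P) (hlie : ∀ x y : V, IsCentral ⁅x, y⁆)
    (hskew : ∀ x y, B (J x) y = -B x (J y)) (hJ : ∀ x y, J ⁅x, y⁆ = ⁅J x, y⁆) {a : ℝ}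
    (hTJ : ∀ c, IsCentral c → T c = (3 * a) • J c) {x : V} (hx : InVperp B x) :
    T x = a • J x := by
  obtain ⟨hTskew, hTc, hTlie⟩ := hT
  have hperp : InVperp B (T x - a • J x) :=
    (hx.map_of_skew hTskew hTc).sub_smul
      (hx.map_of_skew hskew fun _ => IsCentral.map_of_lie hJ) a
  have hcent : IsCentral (T x - a • J x) := hP.isCentral_of_lie_inVperp fun y hy => by
    have h3 : (3 : ℝ) • ⁅T x, y⁆ = (3 : ℝ) • a • ⁅J x, y⁆ := by
      rw [← hTlie x y hx hy, hTJ _ (hlie x y), hJ, mul_smul]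
    rw [sub_lie, smul_lie, sub_eq_zero]
    exact smul_right_injective V (three_ne_zero : (3 : ℝ) ≠ 0) h3
  exact sub_eq_zero.mp (hP.eq_zero_of_isCentral_of_inVperp hB hcent hperp)

theorem IsKY.eq_smul_kyTensor (hT : IsKY B T) (hB : B.SeparatingLeft)
    (hP : IsCentralProjection B P) (hlie : ∀ x y : V, IsCentral ⁅x, y⁆)
    (hskew : ∀ x y, B (J x) y = -B x (J y)) (hJ : ∀ x y, J ⁅x, y⁆ = ⁅J x, y⁆) {a : ℝ}
    (hTJ : ∀ c, IsCentral c → T c = (3 * a) • J c) : T = a • kyTensor J P := by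
  ext x
  calc T x = T (x - P x) + T (P x) := by rw [← map_add, sub_add_cancel]
    _ = a • J (x - P x) + (3 * a) • J (P x) := by
      rw [hT.eq_smul_of_inVperp hB hP hlie hskew hJ hTJ (hP.inVperp_sub x),
        hTJ _ (hP.isCentral x)]
    _ = a • kyTensor J P x := by
      rw [kyTensor_apply, map_sub]
      module

/-- The `B`-orthogonal projection onto `span {z, w}`, for `z, w` orthonormal. -/
def pairProjection (B : V →ₗ[ℝ] V →ₗ[ℝ] ℝ) (z w : V) : V →ₗ[ℝ] V :=
  (B z).smulRight z + (B w).smulRight w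

theorem pairProjection_apply (z w x : V) :
    pairProjection B z w x = B z x • z + B w x • w := rfl

theorem apply_pair_of_skew (hB : ∀ x y, B x y = B y x) {z w : V}
    (hP : IsCentralProjection B (pairProjection B z w)) (hz : IsCentral z) (hw : IsCentral w)
    (hskew : ∀ x y, B (T x) y = -B x (T y)) (hTc : ∀ c, IsCentral c → IsCentral (T c)) :
    T z = B w (T z) • w ∧ T w = -(B w (T z) • z) := by
  have hself : ∀ x, B x (T x) = 0 := fun x => by linarith [hskew x x, hB x (T x)]
  have hswap : B z (T w) = -B w (T z) := by rw [hB w, hskew, neg_neg]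
  have hTz := hP.apply_of_isCentral _ (hTc z hz)
  have hTw := hP.apply_of_isCentral _ (hTc w hw)
  rw [pairProjection_apply, hself, zero_smul] at hTz hTw
  rw [zero_add] at hTz
  rw [add_zero, hswap, neg_smul] at hTw
  exact ⟨hTz.symm, hTw.symm⟩

theorem IsCentralProjection.map_eq_smul_add_smul {z w : V}
    (hP : IsCentralProjection B (pairProjection B z w)) (S : V →ₗ[ℝ] V) {c : V}
    (hc : IsCentral c) : S c = B z c • S z + B w c • S w := by
  rw [← map_smul, ← map_smul, ← map_add, ← pairProjection_apply, hP.apply_of_isCentral c hc]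

theorem eq_smul_of_skew_of_pair (hB : ∀ x y, B x y = B y x) {z w : V}
    (hP : IsCentralProjection B (pairProjection B z w)) (hz : IsCentral z) (hw : IsCentral w)
    (hskew : ∀ x y, B (T x) y = -B x (T y)) (hTc : ∀ c, IsCentral c → IsCentral (T c))
    (hJz : J z = w) (hJw : J w = -z) {c : V} (hc : IsCentral c) : T c = B w (T z) • J c := by
  obtain ⟨hTz, hTw⟩ := apply_pair_of_skew hB hP hz hw hskew hTc
  generalize B w (T z) = t at hTz hTw ⊢
  rw [hP.map_eq_smul_add_smul T hc, hP.map_eq_smul_add_smul J hc, hTz, hTw, hJz, hJw]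
  module

end KillingYano

/-- `x, u, y, v, z, w` is an orthonormal basis of `V` with the bracket relations of the real Lie
algebra underlying the complex Heisenberg algebra. In complex terms `x i, y i, z` is the standard
basis and `u = √-1 x`, `v = √-1 y`, `w = √-1 z`. -/
structure IsComplexHeisenbergFrame {ι V : Type*} [DecidableEq ι] [LieRing V] [LieAlgebra ℝ V]
    (B : V →ₗ[ℝ] V →ₗ[ℝ] ℝ) (x u y v : ι → V) (z w : V) : Prop where
  symm : ∀ a b, B a b = B b a
  xx : ∀ i j, B (x i) (x j) = if i = j then 1 else 0
  uu : ∀ i j, B (u i) (u j) = if i = j then 1 else 0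
  yy : ∀ i j, B (y i) (y j) = if i = j then 1 else 0
  vv : ∀ i j, B (v i) (v j) = if i = j then 1 else 0
  xu : ∀ i j, B (x i) (u j) = 0
  xy : ∀ i j, B (x i) (y j) = 0
  xv : ∀ i j, B (x i) (v j) = 0
  uy : ∀ i j, B (u i) (y j) = 0
  uv : ∀ i j, B (u i) (v j) = 0
  yv : ∀ i j, B (y i) (v j) = 0
  xz : ∀ i, B (x i) z = 0
  xw : ∀ i, B (x i) w = 0
  uz : ∀ i, B (u i) z = 0
  uw : ∀ i, B (u i) w = 0
  yz : ∀ i, B (y i) z = 0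
  yw : ∀ i, B (y i) w = 0
  vz : ∀ i, B (v i) z = 0
  vw : ∀ i, B (v i) w = 0
  zz : B z z = 1
  ww : B w w = 1
  zw : B z w = 0
  span_eq_top : Submodule.span ℝ
    (Set.range x ∪ Set.range u ∪ Set.range y ∪ Set.range v ∪ {z, w}) = ⊤
  lie_xy : ∀ i, ⁅x i, y i⁆ = z
  lie_xv : ∀ i, ⁅x i, v i⁆ = w
  lie_uy : ∀ i, ⁅u i, y i⁆ = w
  lie_uv : ∀ i, ⁅u i, v i⁆ = -z
  lie_xx : ∀ i j, ⁅x i, x j⁆ = 0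
  lie_uu : ∀ i j, ⁅u i, u j⁆ = 0
  lie_yy : ∀ i j, ⁅y i, y j⁆ = 0
  lie_vv : ∀ i j, ⁅v i, v j⁆ = 0
  lie_xu : ∀ i j, ⁅x i, u j⁆ = 0
  lie_yv : ∀ i j, ⁅y i, v j⁆ = 0
  lie_xy_of_ne : ∀ i j, i ≠ j → ⁅x i, y j⁆ = 0
  lie_xv_of_ne : ∀ i j, i ≠ j → ⁅x i, v j⁆ = 0
  lie_uy_of_ne : ∀ i j, i ≠ j → ⁅u i, y j⁆ = 0
  lie_uv_of_ne : ∀ i j, i ≠ j → ⁅u i, v j⁆ = 0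
  isCentral_z : IsCentral z
  isCentral_w : IsCentral w

/-- `T` acts on the frame as `a • T₀`, for `T₀` the distinguished Killing–Yano tensor of the
complex Heisenberg algebra. -/
def ActsAsMultiple {ι V : Type*} [AddCommGroup V] [Module ℝ V] (x u y v : ι → V) (z w : V)
    (a : ℝ) (T : V →ₗ[ℝ] V) : Prop :=
  (∀ i, T (x i) = a • u i) ∧ (∀ i, T (u i) = -(a • x i)) ∧
    (∀ i, T (y i) = a • v i) ∧ (∀ i, T (v i) = -(a • y i)) ∧
    T z = (3 * a) • w ∧ T w = -((3 * a) • z)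

/-- The vectors of a frame as a single family: the left summand `ι ⊕ ι ⊕ Unit` labels the complex
basis `x, y, z`, the right one its products with `√-1`. -/
def heisenbergFamily {ι V : Type*} (x u y v : ι → V) (z w : V) :
    (ι ⊕ ι ⊕ Unit) ⊕ (ι ⊕ ι ⊕ Unit) → V :=
  Sum.elim (Sum.elim x (Sum.elim y fun _ => z)) (Sum.elim u (Sum.elim v fun _ => w))

namespace IsComplexHeisenbergFrame

variable {ι V : Type*} [DecidableEq ι] [LieRing V] [LieAlgebra ℝ V]
  {B : V →ₗ[ℝ] V →ₗ[ℝ] ℝ} {x u y v : ι → V} {z w : V}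

section Basis

open Module

theorem hom_ext (h : IsComplexHeisenbergFrame B x u y v z w) {W : Type*} [AddCommMonoid W]
    [Module ℝ W] {f g : V →ₗ[ℝ] W} (hx : ∀ i, f (x i) = g (x i)) (hu : ∀ i, f (u i) = g (u i))
    (hy : ∀ i, f (y i) = g (y i)) (hv : ∀ i, f (v i) = g (v i)) (hz : f z = g z)
    (hw : f w = g w) : f = g := by
  refine LinearMap.ext_on h.span_eq_top ?_
  rintro _ ((((⟨i, rfl⟩ | ⟨i, rfl⟩) | ⟨i, rfl⟩) | ⟨i, rfl⟩) | rfl | rfl)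
  exacts [hx i, hu i, hy i, hv i, hz, hw]

theorem apply_heisenbergFamily (h : IsComplexHeisenbergFrame B x u y v z w)
    (p q : (ι ⊕ ι ⊕ Unit) ⊕ (ι ⊕ ι ⊕ Unit)) :
    B (heisenbergFamily x u y v z w p) (heisenbergFamily x u y v z w q) =
      if p = q then 1 else 0 := by
  rcases p with (i | i | _) | (i | i | _) <;> rcases q with (j | j | _) | (j | j | _) <;>
    simp [heisenbergFamily, h.xx, h.uu, h.yy, h.vv, h.xu, h.xy, h.xv, h.uy, h.uv, h.yv, h.xz, h.xw,
      h.uz, h.uw, h.yz, h.yw, h.vz, h.vw, h.zz, h.ww, h.zw, h.symm _ (x _), h.symm (v _) (u _),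
      h.symm (y _) (u _), h.symm (v _) (y _), h.symm z, h.symm w]

theorem isOrthoᵢ (h : IsComplexHeisenbergFrame B x u y v z w) :
    B.IsOrthoᵢ (heisenbergFamily x u y v z w) :=
  fun p q hpq => (h.apply_heisenbergFamily p q).trans (if_neg hpq)

theorem apply_self_ne_zero (h : IsComplexHeisenbergFrame B x u y v z w)
    (p : (ι ⊕ ι ⊕ Unit) ⊕ (ι ⊕ ι ⊕ Unit)) :
    B (heisenbergFamily x u y v z w p) (heisenbergFamily x u y v z w p) ≠ 0 := by
  simp [h.apply_heisenbergFamily]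

/-- The basis formed by a frame, with the labels of `heisenbergFamily`. -/
noncomputable def basis (h : IsComplexHeisenbergFrame B x u y v z w) :
    Basis ((ι ⊕ ι ⊕ Unit) ⊕ (ι ⊕ ι ⊕ Unit)) ℝ V :=
  Basis.mk (LinearMap.linearIndependent_of_isOrthoᵢ h.isOrthoᵢ h.apply_self_ne_zero) <| by
    rw [← h.span_eq_top]
    refine Submodule.span_mono ?_
    simp only [heisenbergFamily, Set.Sum.elim_range]
    rintro _ ((((⟨i, rfl⟩ | ⟨i, rfl⟩) | ⟨i, rfl⟩) | ⟨i, rfl⟩) | rfl | rfl) <;> simp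

theorem coe_basis (h : IsComplexHeisenbergFrame B x u y v z w) :
    ⇑h.basis = heisenbergFamily x u y v z w :=
  Basis.coe_mk _ _

theorem separatingLeft (h : IsComplexHeisenbergFrame B x u y v z w) : B.SeparatingLeft :=
  LinearMap.IsOrthoᵢ.separatingLeft_of_not_isOrtho_basis_self h.basis
    (h.coe_basis ▸ h.isOrthoᵢ) (h.coe_basis ▸ h.apply_self_ne_zero)

end Basis

section Bracket

theorem lie_xy_eq_ite (h : IsComplexHeisenbergFrame B x u y v z w) (i j : ι) :
    ⁅x i, y j⁆ = if i = j then z else 0 := by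
  split_ifs with hij
  exacts [hij ▸ h.lie_xy i, h.lie_xy_of_ne i j hij]

theorem lie_xv_eq_ite (h : IsComplexHeisenbergFrame B x u y v z w) (i j : ι) :
    ⁅x i, v j⁆ = if i = j then w else 0 := by
  split_ifs with hij
  exacts [hij ▸ h.lie_xv i, h.lie_xv_of_ne i j hij]

theorem lie_uy_eq_ite (h : IsComplexHeisenbergFrame B x u y v z w) (i j : ι) :
    ⁅u i, y j⁆ = if i = j then w else 0 := by
  split_ifs with hij
  exacts [hij ▸ h.lie_uy i, h.lie_uy_of_ne i j hij]

theorem lie_uv_eq_ite (h : IsComplexHeisenbergFrame B x u y v z w) (i j : ι) :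
    ⁅u i, v j⁆ = -if i = j then z else 0 := by
  split_ifs with hij
  exacts [hij ▸ h.lie_uv i, (h.lie_uv_of_ne i j hij).trans neg_zero.symm]

theorem lie_x (h : IsComplexHeisenbergFrame B x u y v z w) (i : ι) (p : V) :
    ⁅x i, p⁆ = B (y i) p • z + B (v i) p • w := by
  refine LinearMap.congr_fun (f := LieAlgebra.ad ℝ V (x i))
    (g := (B (y i)).smulRight z + (B (v i)).smulRight w)
    (h.hom_ext (fun j => ?_) (fun j => ?_) (fun j => ?_) (fun j => ?_) ?_ ?_) p
  · simp [h.lie_xx, h.symm _ (x j), h.xy, h.xv]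
  · simp [h.lie_xu, h.symm _ (u j), h.uy, h.uv]
  · simp [h.lie_xy_eq_ite, h.yy, h.symm (v i), h.yv]
  · simp [h.lie_xv_eq_ite, h.vv, h.yv]
  · simp [h.isCentral_z.lie_eq_zero_s17, h.yz, h.vz]
  · simp [h.isCentral_w.lie_eq_zero_s17, h.yw, h.vw]

theorem lie_u (h : IsComplexHeisenbergFrame B x u y v z w) (i : ι) (p : V) :
    ⁅u i, p⁆ = B (y i) p • w - B (v i) p • z := by
  refine LinearMap.congr_fun (f := LieAlgebra.ad ℝ V (u i))
    (g := (B (y i)).smulRight w - (B (v i)).smulRight z)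
    (h.hom_ext (fun j => ?_) (fun j => ?_) (fun j => ?_) (fun j => ?_) ?_ ?_) p
  · simp [← lie_skew (u i), h.lie_xu, h.symm _ (x j), h.xy, h.xv]
  · simp [h.lie_uu, h.symm _ (u j), h.uy, h.uv]
  · simp [h.lie_uy_eq_ite, h.yy, h.symm (v i), h.yv]
  · simp [h.lie_uv_eq_ite, h.vv, h.yv]
  · simp [h.isCentral_z.lie_eq_zero_s17, h.yz, h.vz]
  · simp [h.isCentral_w.lie_eq_zero_s17, h.yw, h.vw]

theorem lie_y (h : IsComplexHeisenbergFrame B x u y v z w) (i : ι) (p : V) :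
    ⁅y i, p⁆ = -(B (x i) p • z + B (u i) p • w) := by
  refine LinearMap.congr_fun (f := LieAlgebra.ad ℝ V (y i))
    (g := -((B (x i)).smulRight z + (B (u i)).smulRight w))
    (h.hom_ext (fun j => ?_) (fun j => ?_) (fun j => ?_) (fun j => ?_) ?_ ?_) p
  · simp [← lie_skew (y i), h.lie_xy_eq_ite, h.xx, h.symm (u i), h.xu, eq_comm (a := j)]
  · simp [← lie_skew (y i), h.lie_uy_eq_ite, h.uu, h.xu, eq_comm (a := j)]
  · simp [h.lie_yy, h.xy, h.uy]
  · simp [h.lie_yv, h.xv, h.uv]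
  · simp [h.isCentral_z.lie_eq_zero_s17, h.xz, h.uz]
  · simp [h.isCentral_w.lie_eq_zero_s17, h.xw, h.uw]

theorem lie_v (h : IsComplexHeisenbergFrame B x u y v z w) (i : ι) (p : V) :
    ⁅v i, p⁆ = B (u i) p • z - B (x i) p • w := by
  refine LinearMap.congr_fun (f := LieAlgebra.ad ℝ V (v i))
    (g := (B (u i)).smulRight z - (B (x i)).smulRight w)
    (h.hom_ext (fun j => ?_) (fun j => ?_) (fun j => ?_) (fun j => ?_) ?_ ?_) p
  · simp [← lie_skew (v i), h.lie_xv_eq_ite, h.xx, h.symm (u i), h.xu, eq_comm (a := j)]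
  · simp [← lie_skew (v i), h.lie_uv_eq_ite, h.uu, h.xu, eq_comm (a := j)]
  · simp [← lie_skew (v i), h.lie_yv, h.xy, h.uy]
  · simp [h.lie_vv, h.xv, h.uv]
  · simp [h.isCentral_z.lie_eq_zero_s17, h.xz, h.uz]
  · simp [h.isCentral_w.lie_eq_zero_s17, h.xw, h.uw]

theorem isCentral_smul_add_smul (h : IsComplexHeisenbergFrame B x u y v z w) (s t : ℝ) :
    IsCentral (s • z + t • w) := fun p => by
  simp [h.isCentral_z p, h.isCentral_w p]

theorem isCentral_lie (h : IsComplexHeisenbergFrame B x u y v z w) (p q : V) :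
    IsCentral ⁅p, q⁆ := fun r => by
  let lieRight : V →ₗ[ℝ] Module.End ℝ V :=
    (LieModule.toEnd ℝ V V : V →ₗ[ℝ] Module.End ℝ V).flip
  refine LinearMap.congr_fun (f := lieRight r ∘ₗ lieRight q) (g := 0)
    (h.hom_ext (fun i => ?_) (fun i => ?_) (fun i => ?_) (fun i => ?_) ?_ ?_) p
  · simp [lieRight, h.lie_x, h.isCentral_z r, h.isCentral_w r]
  · simp [lieRight, h.lie_u, h.isCentral_z r, h.isCentral_w r]
  · simp [lieRight, h.lie_y, h.isCentral_z r, h.isCentral_w r]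
  · simp [lieRight, h.lie_v, h.isCentral_z r, h.isCentral_w r]
  · simp [lieRight, h.isCentral_z q]
  · simp [lieRight, h.isCentral_w q]

theorem eq_zero_of_smul_add_smul_eq_zero (h : IsComplexHeisenbergFrame B x u y v z w) {s t : ℝ}
    (hst : s • z + t • w = 0) : s = 0 ∧ t = 0 := by
  have hs := congrArg (B z) hst
  have ht := congrArg (B w) hst
  simp only [map_add, map_smul, map_zero, h.zz, h.ww, h.zw, h.symm w z, smul_eq_mul, mul_one,
    mul_zero, add_zero, zero_add] at hs ht
  exact ⟨hs, ht⟩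

theorem isCentralProjection (h : IsComplexHeisenbergFrame B x u y v z w) :
    IsCentralProjection B (pairProjection B z w) where
  isCentral p := h.isCentral_smul_add_smul _ _
  apply_of_isCentral c hc := by
    have hxu : ∀ i, B (x i) c = 0 ∧ B (u i) c = 0 := fun i =>
      h.eq_zero_of_smul_add_smul_eq_zero <| by
        rw [← neg_eq_zero, ← h.lie_y, hc.lie_eq_zero_s17]
    have hyv : ∀ i, B (y i) c = 0 ∧ B (v i) c = 0 := fun i =>
      h.eq_zero_of_smul_add_smul_eq_zero <| by rw [← h.lie_x, hc.lie_eq_zero_s17]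
    have hB : B (pairProjection B z w c) = B c := by
      refine h.hom_ext (fun i => ?_) (fun i => ?_) (fun i => ?_) (fun i => ?_) ?_ ?_
      · simp [pairProjection_apply, h.symm _ (x i), h.xz, h.xw, hxu]
      · simp [pairProjection_apply, h.symm _ (u i), h.uz, h.uw, hxu]
      · simp [pairProjection_apply, h.symm _ (y i), h.yz, h.yw, hyv]
      · simp [pairProjection_apply, h.symm _ (v i), h.vz, h.vw, hyv]
      · simp [pairProjection_apply, h.symm w z, h.symm c z, h.zz, h.zw]
      · simp [pairProjection_apply, h.symm c w, h.ww, h.zw]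
    rw [← sub_eq_zero]
    exact h.separatingLeft _ fun q => by rw [map_sub, hB, sub_self, LinearMap.zero_apply]
  selfAdjoint p q := by
    simp only [pairProjection_apply, map_add, map_smul, LinearMap.add_apply, LinearMap.smul_apply,
      smul_eq_mul, h.symm p z, h.symm p w]
    ring

end Bracket

section KillingYano

theorem complexStructure_x (h : IsComplexHeisenbergFrame B x u y v z w) (i : ι) :
    complexStructure h.basis (x i) = u i := by
  simpa [h.coe_basis, heisenbergFamily] using complexStructure_inl h.basis (Sum.inl i)

theorem complexStructure_u (h : IsComplexHeisenbergFrame B x u y v z w) (i : ι) :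
    complexStructure h.basis (u i) = -x i := by
  simpa [h.coe_basis, heisenbergFamily] using complexStructure_inr h.basis (Sum.inl i)

theorem complexStructure_y (h : IsComplexHeisenbergFrame B x u y v z w) (i : ι) :
    complexStructure h.basis (y i) = v i := by
  simpa [h.coe_basis, heisenbergFamily] using complexStructure_inl h.basis (Sum.inr (Sum.inl i))

theorem complexStructure_v (h : IsComplexHeisenbergFrame B x u y v z w) (i : ι) :
    complexStructure h.basis (v i) = -y i := by
  simpa [h.coe_basis, heisenbergFamily] using complexStructure_inr h.basis (Sum.inr (Sum.inl i))

theorem complexStructure_z (h : IsComplexHeisenbergFrame B x u y v z w) :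
    complexStructure h.basis z = w := by
  simpa [h.coe_basis, heisenbergFamily] using complexStructure_inl h.basis (Sum.inr (Sum.inr ()))

theorem complexStructure_w (h : IsComplexHeisenbergFrame B x u y v z w) :
    complexStructure h.basis w = -z := by
  simpa [h.coe_basis, heisenbergFamily] using complexStructure_inr h.basis (Sum.inr (Sum.inr ()))

theorem complexStructure_lie (h : IsComplexHeisenbergFrame B x u y v z w) (p q : V) :
    complexStructure h.basis ⁅p, q⁆ = ⁅complexStructure h.basis p, q⁆ := by
  let lieRight : V →ₗ[ℝ] Module.End ℝ V :=
    (LieModule.toEnd ℝ V V : V →ₗ[ℝ] Module.End ℝ V).flip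
  refine LinearMap.congr_fun
    (f := complexStructure h.basis ∘ₗ lieRight q) (g := lieRight q ∘ₗ complexStructure h.basis)
    (h.hom_ext (fun i => ?_) (fun i => ?_) (fun i => ?_) (fun i => ?_) ?_ ?_) p
  · simp [lieRight, h.complexStructure_x, h.complexStructure_z, h.complexStructure_w,
      h.lie_x, h.lie_u, sub_eq_add_neg]
  · simp [lieRight, h.complexStructure_u, h.complexStructure_z, h.complexStructure_w,
      h.lie_x, h.lie_u, sub_eq_add_neg, add_comm]
  · simp [lieRight, h.complexStructure_y, h.complexStructure_z, h.complexStructure_w,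
      h.lie_y, h.lie_v, sub_eq_add_neg, add_comm]
  · simp [lieRight, h.complexStructure_v, h.complexStructure_z, h.complexStructure_w,
      h.lie_y, h.lie_v, sub_eq_add_neg, add_comm]
  · simp [lieRight, h.complexStructure_z, h.isCentral_z q, h.isCentral_w q]
  · simp [lieRight, h.complexStructure_w, h.isCentral_z q, h.isCentral_w q]

theorem complexStructure_skew (h : IsComplexHeisenbergFrame B x u y v z w) (p q : V) :
    B (complexStructure h.basis p) q = -B p (complexStructure h.basis q) :=
  _root_.complexStructure_skew (h.coe_basis ▸ h.apply_heisenbergFamily) p q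

/-- The distinguished Killing–Yano tensor `T₀` of a complex Heisenberg algebra. -/
noncomputable def distinguishedKY (h : IsComplexHeisenbergFrame B x u y v z w) : V →ₗ[ℝ] V :=
  kyTensor (complexStructure h.basis) (pairProjection B z w)

theorem isKY_distinguishedKY (h : IsComplexHeisenbergFrame B x u y v z w) :
    IsKY B h.distinguishedKY :=
  isKY_kyTensor h.isCentralProjection h.isCentral_lie h.complexStructure_skew
    h.complexStructure_lie

theorem actsAsMultiple_distinguishedKY (h : IsComplexHeisenbergFrame B x u y v z w) :
    ActsAsMultiple x u y v z w 1 h.distinguishedKY := by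
  refine ⟨fun i => ?_, fun i => ?_, fun i => ?_, fun i => ?_, ?_, ?_⟩
  · simp [distinguishedKY, kyTensor_apply, pairProjection_apply, h.symm _ (x i), h.xz, h.xw,
      h.complexStructure_x]
  · simp [distinguishedKY, kyTensor_apply, pairProjection_apply, h.symm _ (u i), h.uz, h.uw,
      h.complexStructure_u]
  · simp [distinguishedKY, kyTensor_apply, pairProjection_apply, h.symm _ (y i), h.yz, h.yw,
      h.complexStructure_y]
  · simp [distinguishedKY, kyTensor_apply, pairProjection_apply, h.symm _ (v i), h.vz, h.vw,
      h.complexStructure_v]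
  · simp [distinguishedKY, h.isCentralProjection.kyTensor_apply_of_isCentral h.isCentral_z,
      h.complexStructure_z]
  · simp [distinguishedKY, h.isCentralProjection.kyTensor_apply_of_isCentral h.isCentral_w,
      h.complexStructure_w]

theorem eq_smul_distinguishedKY (h : IsComplexHeisenbergFrame B x u y v z w) {T : V →ₗ[ℝ] V}
    (hT : IsKY B T) : T = (B w (T z) / 3) • h.distinguishedKY := by
  refine hT.eq_smul_kyTensor h.separatingLeft h.isCentralProjection h.isCentral_lie
    h.complexStructure_skew h.complexStructure_lie fun c hc => ?_
  rw [mul_div_cancel₀ _ (three_ne_zero : (3 : ℝ) ≠ 0)]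
  exact eq_smul_of_skew_of_pair h.symm h.isCentralProjection h.isCentral_z h.isCentral_w hT.1
    hT.2.1 h.complexStructure_z h.complexStructure_w hc

end KillingYano

end IsComplexHeisenbergFrame

theorem ActsAsMultiple.smul {ι V : Type*} [AddCommGroup V] [Module ℝ V] {x u y v : ι → V}
    {z w : V} {b : ℝ} {T : V →ₗ[ℝ] V} (hT : ActsAsMultiple x u y v z w b T) (a : ℝ) :
    ActsAsMultiple x u y v z w (a * b) (a • T) := by
  obtain ⟨hx, hu, hy, hv, hz, hw⟩ := hT
  refine ⟨fun i => ?_, fun i => ?_, fun i => ?_, fun i => ?_, ?_, ?_⟩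
  · rw [LinearMap.smul_apply, hx, mul_smul]
  · rw [LinearMap.smul_apply, hu, smul_neg, mul_smul]
  · rw [LinearMap.smul_apply, hy, mul_smul]
  · rw [LinearMap.smul_apply, hv, smul_neg, mul_smul]
  · rw [LinearMap.smul_apply, hz, smul_smul, mul_left_comm]
  · rw [LinearMap.smul_apply, hw, smul_neg, smul_smul, mul_left_comm]

theorem ActsAsMultiple.eq_div_three {ι V : Type*} [AddCommGroup V] [Module ℝ V]
    {B : V →ₗ[ℝ] V →ₗ[ℝ] ℝ} {x u y v : ι → V} {z w : V} (hww : B w w = 1) {a : ℝ}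
    {T : V →ₗ[ℝ] V} (hT : ActsAsMultiple x u y v z w a T) : a = B w (T z) / 3 := by
  obtain ⟨-, -, -, -, hTz, -⟩ := hT
  rw [hTz, map_smul, hww, smul_eq_mul, mul_one, mul_div_cancel_left₀ a three_ne_zero]

theorem statement_17_general {ι V : Type*} [DecidableEq ι] [LieRing V] [LieAlgebra ℝ V]
    {B : V →ₗ[ℝ] V →ₗ[ℝ] ℝ} {x u y v : ι → V} {z w : V}
    (h : IsComplexHeisenbergFrame B x u y v z w) :
    (∀ a : ℝ, ∃ T : V →ₗ[ℝ] V, IsKY B T ∧ ActsAsMultiple x u y v z w a T) ∧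
    (∀ T : V →ₗ[ℝ] V, IsKY B T → ∃! a : ℝ, ActsAsMultiple x u y v z w a T) := by
  have hacts : ∀ a : ℝ, ActsAsMultiple x u y v z w a (a • h.distinguishedKY) := fun a => by
    simpa only [mul_one] using h.actsAsMultiple_distinguishedKY.smul a
  refine ⟨fun a => ⟨a • h.distinguishedKY, h.isKY_distinguishedKY.smul a, hacts a⟩, fun T hT => ?_⟩
  refine ⟨B w (T z) / 3, ?_, fun b hb => hb.eq_div_three h.ww⟩
  simpa only [← h.eq_smul_distinguishedKY hT] using hacts (B w (T z) / 3)

/-- the real Lie algebra underlying the complex Heisenberg Lie algebra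
𝔥_{2n+1}(ℂ) (n ≥ 2), with its canonical H-type Hermitian metric, has a
one-dimensional space of KY tensors, spanned by T₀ with T₀x_i = u_i, T₀u_i = -x_i,
T₀y_i = v_i, T₀v_i = -y_i, T₀z = 3w, T₀w = -3z. -/
theorem statement_17 (n : ℕ) (hn : 2 ≤ n)
    (V : Type*) [LieRing V] [LieAlgebra ℝ V]
    (B : V →ₗ[ℝ] V →ₗ[ℝ] ℝ)
    (hsymm : ∀ a b : V, B a b = B b a) (hpos : ∀ a : V, a ≠ 0 → 0 < B a a)
    (x u y v : Fin n → V) (z w : V)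
    -- the basis {x i, u i, y i, v i, z, w} is orthonormal
    (hxx : ∀ i j, B (x i) (x j) = if i = j then 1 else 0)
    (huu : ∀ i j, B (u i) (u j) = if i = j then 1 else 0)
    (hyy : ∀ i j, B (y i) (y j) = if i = j then 1 else 0)
    (hvv : ∀ i j, B (v i) (v j) = if i = j then 1 else 0)
    (hxu : ∀ i j, B (x i) (u j) = 0) (hxy : ∀ i j, B (x i) (y j) = 0)
    (hxv : ∀ i j, B (x i) (v j) = 0) (huy : ∀ i j, B (u i) (y j) = 0)
    (huv : ∀ i j, B (u i) (v j) = 0) (hyv : ∀ i j, B (y i) (v j) = 0)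
    (hxz : ∀ i, B (x i) z = 0) (hxw : ∀ i, B (x i) w = 0)
    (huz : ∀ i, B (u i) z = 0) (huw : ∀ i, B (u i) w = 0)
    (hyz : ∀ i, B (y i) z = 0) (hyw : ∀ i, B (y i) w = 0)
    (hvz : ∀ i, B (v i) z = 0) (hvw : ∀ i, B (v i) w = 0)
    (hz1 : B z z = 1) (hw1 : B w w = 1) (hzw : B z w = 0)
    -- ... and spans V
    (hspan : Submodule.span ℝ
      (Set.range x ∪ Set.range u ∪ Set.range y ∪ Set.range v ∪ {z, w}) = ⊤)
    -- the bracket relations of 𝔥_{2n+1}(ℂ) viewed as a real Lie algebra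
    (hb1 : ∀ i, ⁅x i, y i⁆ = z) (hb2 : ∀ i, ⁅x i, v i⁆ = w)
    (hb3 : ∀ i, ⁅u i, y i⁆ = w) (hb4 : ∀ i, ⁅u i, v i⁆ = -z)
    (hbxx : ∀ i j, ⁅x i, x j⁆ = 0) (hbuu : ∀ i j, ⁅u i, u j⁆ = 0)
    (hbyy : ∀ i j, ⁅y i, y j⁆ = 0) (hbvv : ∀ i j, ⁅v i, v j⁆ = 0)
    (hbxu : ∀ i j, ⁅x i, u j⁆ = 0) (hbyv : ∀ i j, ⁅y i, v j⁆ = 0)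
    (hbxy : ∀ i j, i ≠ j → ⁅x i, y j⁆ = 0)
    (hbxv : ∀ i j, i ≠ j → ⁅x i, v j⁆ = 0)
    (hbuy : ∀ i j, i ≠ j → ⁅u i, y j⁆ = 0)
    (hbuv : ∀ i j, i ≠ j → ⁅u i, v j⁆ = 0)
    (hzc : IsCentral z) (hwc : IsCentral w) :
    (∀ a : ℝ, ∃ T : V →ₗ[ℝ] V, IsKY B T ∧
        (∀ i, T (x i) = a • u i) ∧ (∀ i, T (u i) = -(a • x i)) ∧
        (∀ i, T (y i) = a • v i) ∧ (∀ i, T (v i) = -(a • y i)) ∧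
        T z = (3 * a) • w ∧ T w = -((3 * a) • z)) ∧
    (∀ T : V →ₗ[ℝ] V, IsKY B T → ∃! a : ℝ,
        (∀ i, T (x i) = a • u i) ∧ (∀ i, T (u i) = -(a • x i)) ∧
        (∀ i, T (y i) = a • v i) ∧ (∀ i, T (v i) = -(a • y i)) ∧
        T z = (3 * a) • w ∧ T w = -((3 * a) • z)) :=
  statement_17_general (by constructor <;> assumption)
end

section
/- Let 𝔫 be a 2-step nilpotent finite-dimensional real Lie algebra with inner product ⟨·,·⟩ and let T be a Killing–Yano tensor on (𝔫,⟨·,·⟩). Then ⁅Tx, y⁆ = ⁅x, Ty⁆ for all x, y ∈ 𝔫. -/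
/-!
For `x, y ∈ 𝔳`, antisymmetry of the bracket and the Killing–Yano equation for both `(x, y)` and
`(y, x)` give `3⁅Tx, y⁆ = T⁅x, y⁆ = -T⁅y, x⁆ = 3⁅x, Ty⁆`. Since `T` preserves the center, central
components contribute nothing to either side, so the identity extends to `𝔫 = 𝔳 ⊕ 𝔷`.
-/

section LieAlgebra

variable {R L : Type*} [CommRing R] [LieRing L] [LieAlgebra R L] {T : L →ₗ[R] L}

lemma lie_map_comm_of_map_lie_eq_smul {c : R} (hc : IsSMulRegular L c) {x y : L}
    (hxy : T ⁅x, y⁆ = c • ⁅T x, y⁆) (hyx : T ⁅y, x⁆ = c • ⁅T y, x⁆) :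
    ⁅T x, y⁆ = ⁅x, T y⁆ := by
  apply hc
  calc c • ⁅T x, y⁆ = T ⁅x, y⁆ := hxy.symm
    _ = -T ⁅y, x⁆ := by rw [← lie_skew, map_neg]
    _ = c • ⁅x, T y⁆ := by rw [hyx, ← smul_neg, lie_skew]

lemma mem_center_iff_lie_eq_zero {z : L} : z ∈ LieAlgebra.center R L ↔ ∀ x : L, ⁅z, x⁆ = 0 := by
  rw [← LieAlgebra.self_module_ker_eq_center, LieModule.mem_ker]

lemma lie_map_comm_of_codisjoint_center {S : Submodule R L}
    (hS : Codisjoint S (LieAlgebra.center R L).toSubmodule)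
    (hTz : ∀ z ∈ LieAlgebra.center R L, T z ∈ LieAlgebra.center R L)
    (hT : ∀ x ∈ S, ∀ y ∈ S, ⁅T x, y⁆ = ⁅x, T y⁆) (x y : L) :
    ⁅T x, y⁆ = ⁅x, T y⁆ := by
  obtain ⟨v, z, hv, hz, rfl⟩ := Submodule.codisjoint_iff_exists_add_eq.mp hS x
  obtain ⟨w, u, hw, hu, rfl⟩ := Submodule.codisjoint_iff_exists_add_eq.mp hS y
  calc ⁅T (v + z), w + u⁆ = ⁅T v, w⁆ := by
        rw [map_add, add_lie, mem_center_iff_lie_eq_zero.mp (hTz z hz), add_zero, lie_add, hu,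
          add_zero]
    _ = ⁅v, T w⁆ := hT v hv w hw
    _ = ⁅v + z, T (w + u)⁆ := by
        rw [add_lie, mem_center_iff_lie_eq_zero.mp hz, add_zero, map_add, lie_add, hTz u hu,
          add_zero]

theorem statement_19_general {c : R} (hc : IsSMulRegular L c) {S : Submodule R L}
    (hS : Codisjoint S (LieAlgebra.center R L).toSubmodule)
    (hTz : ∀ z ∈ LieAlgebra.center R L, T z ∈ LieAlgebra.center R L)
    (hTS : ∀ x ∈ S, ∀ y ∈ S, T ⁅x, y⁆ = c • ⁅T x, y⁆) (x y : L) :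
    ⁅T x, y⁆ = ⁅x, T y⁆ :=
  lie_map_comm_of_codisjoint_center hS hTz
    (fun v hv w hw ↦ lie_map_comm_of_map_lie_eq_smul hc (hTS v hv w hw) (hTS w hw v hv)) x y

end LieAlgebra

lemma disjoint_orthogonal_of_apply_self_ne_zero {R M : Type*} [CommRing R] [AddCommGroup M]
    [Module R M] {B : LinearMap.BilinForm R M} {W : Submodule R M}
    (hW : ∀ x ∈ W, x ≠ 0 → B x x ≠ 0) : Disjoint W (B.orthogonal W) :=
  Submodule.disjoint_def.mpr fun x hx hx' ↦ by_contra fun hne ↦ hW x hx hne (hx' x hx)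

lemma isCompl_orthogonal_of_apply_self_ne_zero {K V : Type*} [Field K] [AddCommGroup V]
    [Module K V] [FiniteDimensional K V] {B : LinearMap.BilinForm K V} (hB : B.IsRefl)
    {W : Submodule K V} (hW : ∀ x ∈ W, x ≠ 0 → B x x ≠ 0) : IsCompl W (B.orthogonal W) :=
  (LinearMap.BilinForm.isCompl_orthogonal_iff_disjoint hB).mpr
    (disjoint_orthogonal_of_apply_self_ne_zero hW)

section Metric

variable {V : Type*} [LieRing V] [LieAlgebra ℝ V]

lemma isCentral_iff_mem_center {x : V} : IsCentral x ↔ x ∈ LieAlgebra.center ℝ V :=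
  mem_center_iff_lie_eq_zero.symm

variable {B : LinearMap.BilinForm ℝ V} {T : V →ₗ[ℝ] V}

lemma inVperp_iff_mem_orthogonal_center (hB : ∀ x y, B x y = B y x) {x : V} :
    InVperp B x ↔ x ∈ B.orthogonal (LieAlgebra.center ℝ V).toSubmodule := by
  simp only [InVperp, isCentral_iff_mem_center, LinearMap.BilinForm.mem_orthogonal_iff,
    LieSubmodule.mem_toSubmodule, hB x]

lemma codisjoint_orthogonal_center [FiniteDimensional ℝ V] (hB : ∀ x y, B x y = B y x)
    (hpos : ∀ x, x ≠ 0 → 0 < B x x) :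
    Codisjoint (B.orthogonal (LieAlgebra.center ℝ V).toSubmodule)
      (LieAlgebra.center ℝ V).toSubmodule :=
  have hrefl : B.IsRefl := fun x y h ↦ (hB y x).trans h
  (isCompl_orthogonal_of_apply_self_ne_zero hrefl fun x _ hx ↦ (hpos x hx).ne').symm.codisjoint

namespace IsKY

lemma map_mem_center (hT : IsKY B T) (z : V) (hz : z ∈ LieAlgebra.center ℝ V) :
    T z ∈ LieAlgebra.center ℝ V :=
  isCentral_iff_mem_center.mp (hT.2.1 z (isCentral_iff_mem_center.mpr hz))

lemma map_lie_eq_smul (hT : IsKY B T) (hB : ∀ x y, B x y = B y x) (x : V)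
    (hx : x ∈ B.orthogonal (LieAlgebra.center ℝ V).toSubmodule) (y : V)
    (hy : y ∈ B.orthogonal (LieAlgebra.center ℝ V).toSubmodule) :
    T ⁅x, y⁆ = (3 : ℝ) • ⁅T x, y⁆ :=
  hT.2.2 x y ((inVperp_iff_mem_orthogonal_center hB).mpr hx)
    ((inVperp_iff_mem_orthogonal_center hB).mpr hy)

end IsKY

end Metric

/-- a KY tensor on a 2-step nilpotent metric Lie algebra satisfies
⁅Tx, y⁆ = ⁅x, Ty⁆ for all x, y. -/
theorem statement_19 (V : Type*) [LieRing V] [LieAlgebra ℝ V] [FiniteDimensional ℝ V]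
    (B : V →ₗ[ℝ] V →ₗ[ℝ] ℝ)
    (hsymm : ∀ x y : V, B x y = B y x) (hpos : ∀ x : V, x ≠ 0 → 0 < B x x)
    (h2 : TwoStepNilpotent V)
    (T : V →ₗ[ℝ] V) (hT : IsKY B T) :
    ∀ x y : V, ⁅T x, y⁆ = ⁅x, T y⁆ := by
  exact statement_19_general (smul_right_injective V three_ne_zero)
    (codisjoint_orthogonal_center hsymm hpos) hT.map_mem_center (hT.map_lie_eq_smul hsymm)
end
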